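/- Fix ν > 0, and let γ₂(λ) = μ₄(λ)/(μ₂(λ))² − 3 denote the excess kurtosis of the CMP(λ,ν) distribution, where μ_k(λ) = E[(X − E X)^k] is the k-th central moment of X ∼ CMP(λ,ν). Then as λ → ∞, γ₂(λ) = (λ^(−1/ν)/ν)·(1 − ((ν²−1)/(24ν²))·λ^(−2/ν) + ((ν²−1)/(6ν³))·λ^(−3/ν) + O(λ^(−4/ν))). Precisely: there exist constants C > 0 and Λ > 0 (depending only on ν) such that for all λ ≥ Λ, |ν·λ^(1/ν)·γ₂(λ) − 1 + ((ν²−1)/(24ν²))·λ^(−2/ν) − ((ν²−1)/(6ν³))·λ^(−3/ν)| ≤ C·λ^(−4/ν). -/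

import Mathlib

open scoped BigOperators

/-- The Conway-Maxwell-Poisson normalizing constant `Z(λ,ν) = ∑_{i=0}^∞ λ^i/(i!)^ν`. -/
noncomputable def cmpZ (lam nu : ℝ) : ℝ := ∑' i : ℕ, lam ^ i / (i.factorial : ℝ) ^ nu

/-- The mean of the `CMP(λ,ν)` distribution. -/
noncomputable def cmpMean (lam nu : ℝ) : ℝ :=
  (∑' j : ℕ, (j : ℝ) * lam ^ j / (j.factorial : ℝ) ^ nu) / cmpZ lam nu

/-- The `k`-th central moment `μ_k = E[(X − E X)^k]` of the `CMP(λ,ν)` distribution. -/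
noncomputable def cmpCentralMoment (k : ℕ) (lam nu : ℝ) : ℝ :=
  (∑' j : ℕ, ((j : ℝ) - cmpMean lam nu) ^ k * lam ^ j / (j.factorial : ℝ) ^ nu) / cmpZ lam nu

/-- The excess kurtosis `γ₂ = μ₄/μ₂² − 3` of the `CMP(λ,ν)` distribution. -/
noncomputable def cmpExcessKurtosis (lam nu : ℝ) : ℝ :=
  cmpCentralMoment 4 lam nu / cmpCentralMoment 2 lam nu ^ 2 - 3


open Filter Topology Asymptotics

/-! ### Weights and expectations -/

/-- The unnormalised CMP weights. -/
noncomputable def cmpWl (ν lam : ℝ) (j : ℕ) : ℝ := lam ^ j / (j.factorial : ℝ) ^ ν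

lemma cmpWl_pos (ν : ℝ) {lam : ℝ} (hl : 0 < lam) (j : ℕ) : 0 < cmpWl ν lam j := by
  unfold cmpWl; positivity

lemma cmpWl_succ (ν : ℝ) (lam : ℝ) (j : ℕ) :
    cmpWl ν lam (j + 1) * ((j : ℝ) + 1) ^ ν = lam * cmpWl ν lam j := by
  unfold cmpWl
  rw [Nat.factorial_succ]
  push_cast
  rw [Real.mul_rpow (by positivity) (by positivity)]
  have h1 : ((j : ℝ) + 1) ^ ν ≠ 0 := by positivity
  have h2 : (j.factorial : ℝ) ^ ν ≠ 0 := by positivity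
  field_simp
  ring

lemma cmpWl_summable {ν : ℝ} (hν : 0 < ν) {lam : ℝ} (hl : 0 < lam) :
    Summable (cmpWl ν lam) := by
  apply summable_of_ratio_test_tendsto_lt_one (l := 0) one_pos
  · exact Eventually.of_forall fun j => (cmpWl_pos ν hl j).ne'
  · have h1 : Tendsto (fun j : ℕ => lam * ((j : ℝ) + 1) ^ (-ν)) atTop (𝓝 (lam * 0)) := by
      apply Tendsto.const_mul
      exact (tendsto_rpow_neg_atTop hν).comp
        (tendsto_atTop_add_const_right _ _ tendsto_natCast_atTop_atTop)
    rw [mul_zero] at h1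
    refine h1.congr fun j => ?_
    rw [Real.norm_of_nonneg (cmpWl_pos ν hl _).le, Real.norm_of_nonneg (cmpWl_pos ν hl _).le]
    rw [eq_div_iff (cmpWl_pos ν hl _).ne', Real.rpow_neg (by positivity)]
    have h1 : ((j : ℝ) + 1) ^ ν ≠ 0 := by positivity
    have := cmpWl_succ ν lam j
    field_simp
    linarith

/-- Polynomial growth. -/
def CmpGood (f : ℕ → ℝ) : Prop := ∃ C : ℝ, ∃ M : ℕ, 0 ≤ C ∧ ∀ j : ℕ, |f j| ≤ C * (1 + (j : ℝ)) ^ M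

namespace CmpGood

lemma const (c : ℝ) : CmpGood (fun _ => c) := ⟨|c|, 0, abs_nonneg _, fun j => by simp⟩

lemma cast : CmpGood (fun j : ℕ => (j : ℝ)) := ⟨1, 1, by norm_num, fun j => by
  rw [abs_of_nonneg (by positivity)]; simp⟩

lemma add {f g : ℕ → ℝ} (hf : CmpGood f) (hg : CmpGood g) : CmpGood (fun j => f j + g j) := by
  obtain ⟨C, M, hC, h⟩ := hf
  obtain ⟨D, N, hD, k⟩ := hg
  refine ⟨C + D, max M N, by positivity, fun j => (abs_add_le _ _).trans ?_⟩
  have h1 : (1 : ℝ) ≤ 1 + j := by simp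
  have a1 : (1 + (j : ℝ)) ^ M ≤ (1 + (j : ℝ)) ^ max M N := pow_le_pow_right₀ h1 (le_max_left _ _)
  have a2 : (1 + (j : ℝ)) ^ N ≤ (1 + (j : ℝ)) ^ max M N := pow_le_pow_right₀ h1 (le_max_right _ _)
  rw [add_mul]
  exact add_le_add ((h j).trans (mul_le_mul_of_nonneg_left a1 hC))
    ((k j).trans (mul_le_mul_of_nonneg_left a2 hD))

lemma mul {f g : ℕ → ℝ} (hf : CmpGood f) (hg : CmpGood g) : CmpGood (fun j => f j * g j) := by
  obtain ⟨C, M, hC, h⟩ := hf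
  obtain ⟨D, N, hD, k⟩ := hg
  refine ⟨C * D, M + N, by positivity, fun j => ?_⟩
  rw [abs_mul, pow_add, mul_mul_mul_comm]
  exact mul_le_mul (h j) (k j) (abs_nonneg _) (by positivity)

lemma sub {f g : ℕ → ℝ} (hf : CmpGood f) (hg : CmpGood g) : CmpGood (fun j => f j - g j) := by
  have := hf.add ((const (-1)).mul hg)
  convert this using 2
  ring

lemma pow {f : ℕ → ℝ} (hf : CmpGood f) (k : ℕ) : CmpGood (fun j => f j ^ k) := by
  induction k with
  | zero => simpa using const 1
  | succ k ih => simpa only [pow_succ] using ih.mul hf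

lemma abs {f : ℕ → ℝ} (hf : CmpGood f) : CmpGood (fun j => |f j|) := by
  obtain ⟨C, M, hC, h⟩ := hf
  exact ⟨C, M, hC, fun j => by simpa using h j⟩

lemma sum {ι : Type*} (s : Finset ι) {f : ι → ℕ → ℝ} (hf : ∀ i ∈ s, CmpGood (f i)) :
    CmpGood (fun j => ∑ i ∈ s, f i j) := by
  classical
  induction s using Finset.induction_on with
  | empty => simpa using const 0
  | insert a s ha ih =>
    simp only [Finset.sum_insert ha]
    exact (hf a (by simp)).add (ih fun i hi => hf i (by simp [hi]))

lemma rpow {ν : ℝ} (hν : 0 < ν) {c : ℝ} (hc : 0 ≤ c) : CmpGood (fun j : ℕ => ((j : ℝ) * c) ^ ν) := by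
  refine ⟨c ^ ν, ⌈ν⌉₊, by positivity, fun j => ?_⟩
  show |((j : ℝ) * c) ^ ν| ≤ _
  rw [abs_of_nonneg (by positivity), Real.mul_rpow (by positivity) hc, mul_comm]
  apply mul_le_mul_of_nonneg_left _ (by positivity)
  calc (j : ℝ) ^ ν ≤ (1 + (j : ℝ)) ^ ν := Real.rpow_le_rpow (by positivity) (by simp) hν.le
    _ ≤ (1 + (j : ℝ)) ^ (⌈ν⌉₊ : ℝ) := Real.rpow_le_rpow_of_exponent_le (by simp) (Nat.le_ceil _)
    _ = _ := Real.rpow_natCast _ _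

lemma summable {f : ℕ → ℝ} (hf : CmpGood f) {ν : ℝ} (hν : 0 < ν) {lam : ℝ} (hl : 0 < lam) :
    Summable (fun j => f j * cmpWl ν lam j) := by
  obtain ⟨C, M, hC, h⟩ := hf
  have hs := (cmpWl_summable hν (lam := Real.exp 1 * lam) (by positivity)).mul_left
    (C * (M.factorial * Real.exp 1))
  refine Summable.of_norm_bounded hs fun j => ?_
  rw [norm_mul, Real.norm_of_nonneg (cmpWl_pos ν hl _).le, Real.norm_eq_abs]
  have h1 : (1 + (j : ℝ)) ^ M ≤ M.factorial * Real.exp (1 + j) := by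
    have := Real.pow_div_factorial_le_exp (x := 1 + (j : ℝ)) (by positivity) M
    rw [div_le_iff₀ (by positivity)] at this
    linarith
  have h2 : cmpWl ν (Real.exp 1 * lam) j = Real.exp j * cmpWl ν lam j := by
    unfold cmpWl
    rw [mul_pow, ← Real.exp_nat_mul, mul_one, mul_div_assoc]
  rw [h2, ← mul_assoc]
  apply mul_le_mul_of_nonneg_right _ (cmpWl_pos ν hl _).le
  refine (h j).trans ?_
  rw [mul_assoc, mul_assoc, ← Real.exp_add]
  exact mul_le_mul_of_nonneg_left h1 hC

end CmpGood

/-- Expectation under CMP, parameter `lam = h ^ (-2ν)`. -/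
noncomputable def cmpEx (ν h : ℝ) (f : ℕ → ℝ) : ℝ :=
  (∑' j, f j * cmpWl ν (h ^ (-(2 * ν))) j) / ∑' j, cmpWl ν (h ^ (-(2 * ν))) j

section
variable {ν h : ℝ}

lemma cmpZ_pos_aux (hν : 0 < ν) (hh : 0 < h) : 0 < ∑' j, cmpWl ν (h ^ (-(2 * ν))) j :=
  (cmpWl_summable hν (by positivity)).tsum_pos (fun j => (cmpWl_pos ν (by positivity) j).le) 0
    (cmpWl_pos ν (by positivity) 0)

lemma cmpEx_const (hν : 0 < ν) (hh : 0 < h) (c : ℝ) : cmpEx ν h (fun _ => c) = c := by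
  unfold cmpEx
  rw [tsum_mul_left, mul_div_assoc, div_self (cmpZ_pos_aux hν hh).ne', mul_one]

lemma cmpEx_add (hν : 0 < ν) (hh : 0 < h) {f g : ℕ → ℝ} (hf : CmpGood f) (hg : CmpGood g) :
    cmpEx ν h (fun j => f j + g j) = cmpEx ν h f + cmpEx ν h g := by
  unfold cmpEx
  rw [← add_div, ← (hf.summable hν (by positivity)).tsum_add (hg.summable hν (by positivity))]
  simp only [add_mul]

lemma cmpEx_mul_left (c : ℝ) (f : ℕ → ℝ) :
    cmpEx ν h (fun j => c * f j) = c * cmpEx ν h f := by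
  unfold cmpEx
  simp only [mul_assoc]
  rw [tsum_mul_left, mul_div_assoc]

lemma cmpEx_sub (hν : 0 < ν) (hh : 0 < h) {f g : ℕ → ℝ} (hf : CmpGood f) (hg : CmpGood g) :
    cmpEx ν h (fun j => f j - g j) = cmpEx ν h f - cmpEx ν h g := by
  unfold cmpEx
  rw [← sub_div, ← (hf.summable hν (by positivity)).tsum_sub (hg.summable hν (by positivity))]
  simp only [sub_mul]

lemma cmpEx_sum (hν : 0 < ν) (hh : 0 < h) {ι : Type*} (s : Finset ι) {f : ι → ℕ → ℝ} (hf : ∀ i ∈ s, CmpGood (f i)) :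
    cmpEx ν h (fun j => ∑ i ∈ s, f i j) = ∑ i ∈ s, cmpEx ν h (f i) := by
  classical
  induction s using Finset.induction_on with
  | empty => simpa using cmpEx_const hν hh 0
  | insert a s ha ih =>
    simp only [Finset.sum_insert ha]
    rw [cmpEx_add hν hh (hf a (by simp)) (CmpGood.sum s fun i hi => hf i (by simp [hi])),
      ih fun i hi => hf i (by simp [hi])]

lemma cmpEx_mono (hν : 0 < ν) (hh : 0 < h) {f g : ℕ → ℝ} (hf : CmpGood f) (hg : CmpGood g) (hfg : ∀ j, f j ≤ g j) :
    cmpEx ν h f ≤ cmpEx ν h g := by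
  unfold cmpEx
  apply div_le_div_of_nonneg_right _ (cmpZ_pos_aux hν hh).le
  exact (hf.summable hν (by positivity)).tsum_le_tsum
    (fun j => mul_le_mul_of_nonneg_right (hfg j) (cmpWl_pos ν (by positivity) j).le)
    (hg.summable hν (by positivity))

lemma cmpEx_abs_le (hν : 0 < ν) (hh : 0 < h) {f g : ℕ → ℝ} (hf : CmpGood f) (hg : CmpGood g) (hfg : ∀ j, |f j| ≤ g j) :
    |cmpEx ν h f| ≤ cmpEx ν h g := by
  rw [abs_le]
  constructor
  · have := cmpEx_mono hν hh ((CmpGood.const (-1)).mul hg) hf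
      fun j => by linarith [(abs_le.1 (hfg j)).1]
    rw [cmpEx_mul_left] at this
    linarith
  · exact cmpEx_mono hν hh hf hg fun j => (abs_le.1 (hfg j)).2

/-- Stein identity. -/
lemma cmpEx_stein (hν : 0 < ν) (hh : 0 < h) {f : ℕ → ℝ} (hf : CmpGood f) :
    cmpEx ν h (fun j => ((j : ℝ) * h ^ 2) ^ ν * f j) = cmpEx ν h (fun j => f (j + 1)) := by
  unfold cmpEx
  congr 1
  have hs := ((CmpGood.rpow hν (sq_nonneg h)).mul hf).summable hν
    (lam := h ^ (-(2 * ν))) (by positivity)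
  rw [hs.tsum_eq_zero_add]
  simp only [Nat.cast_zero, zero_mul, Real.zero_rpow hν.ne', zero_add]
  refine tsum_congr fun j => ?_
  have h1 := cmpWl_succ ν (h ^ (-(2 * ν))) j
  have h2 : (h ^ 2) ^ ν * h ^ (-(2 * ν)) = 1 := by
    rw [← Real.rpow_natCast h 2, ← Real.rpow_mul hh.le, ← Real.rpow_add hh]
    simp
  push_cast
  rw [Real.mul_rpow (by positivity) (by positivity)]
  calc _ = (h ^ 2) ^ ν * f (j + 1) *
        (cmpWl ν (h ^ (-(2 * ν))) (j + 1) * ((j : ℝ) + 1) ^ ν) := by ring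
    _ = ((h ^ 2) ^ ν * h ^ (-(2 * ν))) * (f (j + 1) * cmpWl ν (h ^ (-(2 * ν))) j) := by
      rw [h1]; ring
    _ = _ := by rw [h2, one_mul]

end

/-- The standardised variable. -/
noncomputable def cmpW (h : ℝ) (j : ℕ) : ℝ := (j : ℝ) * h - 1 / h

lemma cmpW_good (h : ℝ) : CmpGood (cmpW h) := (CmpGood.cast.mul (CmpGood.const h)).sub (CmpGood.const _)

lemma cmpW_x {h : ℝ} (hh : 0 < h) (j : ℕ) : (j : ℝ) * h ^ 2 = 1 + h * cmpW h j := by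
  unfold cmpW; field_simp; ring

lemma cmpW_succ (h : ℝ) (j : ℕ) : cmpW h (j + 1) = cmpW h j + h := by
  unfold cmpW; push_cast; ring

/-- The standardised moments. -/
noncomputable def cmpQ (ν : ℝ) (k : ℕ) (h : ℝ) : ℝ := cmpEx ν h (fun j => cmpW h j ^ k)

open Filter Topology Asymptotics

/-! ### Taylor expansion of `(1+y)^ν` -/

lemma cmp_choose_succ (ν : ℝ) (i : ℕ) :
    Ring.choose ν (i + 1) = Ring.choose ν i * (ν - i) / (i + 1) := by
  rw [Ring.choose_eq_smul, Ring.choose_eq_smul, descPochhammer_succ_right, Polynomial.smeval_mul,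
    Nat.factorial_succ]
  simp only [Polynomial.smeval_sub, Polynomial.smeval_X, Polynomial.smeval_natCast, smul_eq_mul]
  push_cast
  have h1 : ((i : ℝ) + 1) ≠ 0 := by positivity
  have h2 : (i.factorial : ℝ) ≠ 0 := by positivity
  simp
  field_simp

lemma cmp_taylor_local (ν : ℝ) (N : ℕ) : ∃ C : ℝ, ∃ δ > 0, 0 ≤ C ∧ ∀ y : ℝ, |y| ≤ δ →
    |(1 + y) ^ ν - ∑ i ∈ Finset.range N, Ring.choose ν i * y ^ i| ≤ C * |y| ^ N := by
  have h := (Real.one_add_rpow_hasFPowerSeriesAt_zero (a := ν)).isBigO_sub_partialSum_pow N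
  obtain ⟨C, hC⟩ := h.bound
  rw [Metric.eventually_nhds_iff] at hC
  obtain ⟨ε, hε, H⟩ := hC
  refine ⟨|C|, ε / 2, by positivity, abs_nonneg _, fun y hy => ?_⟩
  have := H (y := y) (by simp; linarith)
  simp only [zero_add, FormalMultilinearSeries.partialSum, binomialSeries_apply] at this
  simp at this
  refine this.trans (mul_le_mul_of_nonneg_right (le_abs_self C) (by positivity))

lemma cmp_taylor {ν : ℝ} (hν : 0 < ν) (N : ℕ) : ∃ C : ℝ, ∃ M : ℕ, 0 ≤ C ∧ ∀ y : ℝ, -1 ≤ y →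
    |(1 + y) ^ ν - ∑ i ∈ Finset.range N, Ring.choose ν i * y ^ i| ≤ C * (|y| ^ N + |y| ^ (N + M)) := by
  obtain ⟨C, δ, hδ, hC, H⟩ := cmp_taylor_local ν N
  set M := ⌈ν⌉₊ with hM
  set D := ∑ i ∈ Finset.range N, |Ring.choose ν i| * (1 / δ) ^ (N - i) with hD
  have hDnn : 0 ≤ D := Finset.sum_nonneg fun i _ => by positivity
  refine ⟨C + D + (1 / δ + 1) ^ M * (1 / δ) ^ N, M, by positivity, fun y hy => ?_⟩
  by_cases hyd : |y| ≤ δ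
  · refine (H y hyd).trans ?_
    have h1 : 0 ≤ |y| ^ N := by positivity
    have h2 : 0 ≤ |y| ^ (N + M) := by positivity
    have h3 : 0 ≤ D + (1 / δ + 1) ^ M * (1 / δ) ^ N := by positivity
    nlinarith [mul_nonneg h3 h1, mul_nonneg h3 h2, mul_nonneg hC h2]
  · push Not at hyd
    have hy0 : 0 < |y| := hδ.trans hyd
    have hr : 1 ≤ |y| * (1 / δ) := by
      rw [mul_one_div, le_div_iff₀ hδ]; linarith
    have h1 : |∑ i ∈ Finset.range N, Ring.choose ν i * y ^ i| ≤ D * |y| ^ N := by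
      refine (Finset.abs_sum_le_sum_abs _ _).trans ?_
      rw [hD, Finset.sum_mul]
      refine Finset.sum_le_sum fun i hi => ?_
      have hi' : i ≤ N := (Finset.mem_range.1 hi).le
      rw [abs_mul, abs_pow, mul_assoc]
      apply mul_le_mul_of_nonneg_left _ (abs_nonneg _)
      calc |y| ^ i = |y| ^ i * 1 := by ring
        _ ≤ |y| ^ i * (|y| * (1 / δ)) ^ (N - i) :=
          mul_le_mul_of_nonneg_left (one_le_pow₀ hr) (by positivity)
        _ = (1 / δ) ^ (N - i) * (|y| ^ i * |y| ^ (N - i)) := by rw [mul_pow]; ring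
        _ = _ := by rw [← pow_add, Nat.add_sub_cancel' hi']
    have h2 : |(1 + y) ^ ν| ≤ (1 / δ + 1) ^ M * (1 / δ) ^ N * |y| ^ (N + M) := by
      rw [abs_of_nonneg (Real.rpow_nonneg (by linarith) _)]
      have hb : 1 + y ≤ |y| * (1 / δ + 1) := by
        have := le_abs_self y; nlinarith
      have hb1 : 1 ≤ |y| * (1 / δ + 1) := by nlinarith
      calc (1 + y) ^ ν ≤ (|y| * (1 / δ + 1)) ^ ν := Real.rpow_le_rpow (by linarith) hb hν.le
        _ ≤ (|y| * (1 / δ + 1)) ^ (M : ℝ) :=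
          Real.rpow_le_rpow_of_exponent_le hb1 (Nat.le_ceil _)
        _ = (|y| * (1 / δ + 1)) ^ M * 1 := by rw [Real.rpow_natCast, mul_one]
        _ ≤ (|y| * (1 / δ + 1)) ^ M * (|y| * (1 / δ)) ^ N :=
          mul_le_mul_of_nonneg_left (one_le_pow₀ hr) (by positivity)
        _ = _ := by rw [mul_pow, mul_pow, pow_add]; ring
    refine (abs_sub _ _).trans ((add_le_add h2 h1).trans ?_)
    have e1 : 0 ≤ |y| ^ N := by positivity
    have e2 : 0 ≤ |y| ^ (N + M) := by positivity
    have e3 : 0 ≤ (1 / δ + 1) ^ M * (1 / δ) ^ N := by positivity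
    nlinarith [mul_nonneg e3 e1, mul_nonneg hDnn e2, mul_nonneg hC e2, mul_nonneg hC e1]

/-! ### Moment bounds -/

lemma cmp_coercive {ν : ℝ} (hν : 0 < ν) {x : ℝ} (hx : 0 ≤ x) :
    min 1 ν * (x - 1) ^ 2 ≤ (x ^ ν - 1) * (1 + x) * (x - 1) := by
  have c1 : min 1 ν ≤ 1 := min_le_left _ _
  have c2 : min 1 ν ≤ ν := min_le_right _ _
  have c0 : 0 < min 1 ν := lt_min one_pos hν
  rcases le_total x 1 with h | h
  · -- `x ≤ 1`
    have key : x ^ ν ≤ 1 + min 1 ν * (x - 1) := by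
      calc x ^ ν ≤ x ^ (min 1 ν) := by
            rcases hx.eq_or_lt with rfl | hx0
            · rw [Real.zero_rpow hν.ne', Real.zero_rpow c0.ne']
            · exact Real.rpow_le_rpow_of_exponent_ge hx0 h c2
        _ = (1 + (x - 1)) ^ (min 1 ν) := by ring_nf
        _ ≤ _ := rpow_one_add_le_one_add_mul_self (by linarith) c0.le c1
    nlinarith [mul_nonneg (mul_nonneg (sub_nonneg.2 key) (by linarith : 0 ≤ 1 + x)) (sub_nonneg.2 h),
      mul_nonneg c0.le (mul_nonneg hx (sq_nonneg (x - 1)))]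
  · have hx0 : 0 < x := by linarith
    have k1 : x ^ (1 - min 1 ν) ≤ 1 + (1 - min 1 ν) * (x - 1) := by
      have := rpow_one_add_le_one_add_mul_self (s := x - 1) (by linarith)
        (sub_nonneg.2 c1) (by linarith : 1 - min 1 ν ≤ 1)
      simpa using this
    have k2 : x ^ (min 1 ν) ≤ x ^ ν := Real.rpow_le_rpow_of_exponent_le h c2
    have k3 : x ^ (1 - min 1 ν) * x ^ (min 1 ν) = x := by
      rw [← Real.rpow_add hx0]; simp
    have k4 : 1 ≤ x ^ (min 1 ν) := Real.one_le_rpow h c0.le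
    have k5 : 0 < x ^ (1 - min 1 ν) := by positivity
    have k6 : 1 ≤ x ^ (1 - min 1 ν) := Real.one_le_rpow h (by linarith)
    set p := x ^ (min 1 ν)
    set r := x ^ (1 - min 1 ν)
    -- `(p-1) x ≥ (p - 1) r = x - r`
    have k7 : r ≤ x := by nlinarith
    have k8 : min 1 ν * (x - 1) ≤ (p - 1) * (1 + x) := by nlinarith
    have k9 : (p - 1) * (1 + x) ≤ (x ^ ν - 1) * (1 + x) := by nlinarith
    nlinarith

lemma cmp_pointwise (m : ℕ) : ∃ C : ℝ, 0 < C ∧ ∀ h : ℝ, 0 < h → h ≤ 1 → ∀ w : ℝ,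
    (1 + (1 + h * w) + h ^ 2) * (w + h) ^ (2 * m + 1) - (1 + (1 + h * w)) * w ^ (2 * m + 1)
      ≤ h * (C * (1 + w ^ (2 * m) + h * w ^ (2 * m + 2))) := by
  refine ⟨(2 * m + 2) * 2 ^ (2 * m + 3), by positivity, fun h hh h1 w => ?_⟩
  set k := 2 * m + 1 with hk
  have hw2 : w ^ (2 * m) = |w| ^ (2 * m) := (Even.pow_abs (by simp) w).symm
  have hw3 : w ^ (2 * m + 2) = |w| ^ (2 * m + 2) := (Even.pow_abs (by simp [parity_simps]) w).symm
  have A0 : 0 ≤ |w| := abs_nonneg _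
  -- difference bound
  have d1 : |(w + h) ^ k - w ^ k| ≤ h * k * (1 + |w|) ^ (2 * m) := by
    have := abs_pow_sub_pow_le (w + h) w k
    refine this.trans ?_
    have e : max |w + h| |w| ≤ 1 + |w| := by
      apply max_le
      · refine (abs_add_le _ _).trans ?_; rw [abs_of_pos hh]; linarith
      · linarith
    have e' : |w + h - w| = h := by simp [abs_of_pos hh]
    rw [e']
    have : max |w + h| |w| ^ (k - 1) ≤ (1 + |w|) ^ (2 * m) := by
      rw [hk]; simp only [Nat.add_sub_cancel]
      exact pow_le_pow_left₀ (by positivity) e _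
    exact mul_le_mul_of_nonneg_left this (by positivity)
  have d2 : |(w + h) ^ k| ≤ (1 + |w|) ^ k := by
    rw [abs_pow]
    apply pow_le_pow_left₀ (abs_nonneg _)
    refine (abs_add_le _ _).trans ?_; rw [abs_of_pos hh]; linarith
  have p1 : (1 + |w|) ^ (2 * m) ≤ 2 ^ (2 * m) * (1 + |w| ^ (2 * m)) := by
    have := add_pow_le (zero_le_one (α := ℝ)) A0 (2 * m)
    refine this.trans ?_
    rw [one_pow]
    apply mul_le_mul_of_nonneg_right _ (by positivity)
    exact pow_le_pow_right₀ (by norm_num) (by omega)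
  have p2 : (1 + |w|) ^ k ≤ 2 ^ k * (2 * (1 + |w| ^ (2 * m + 2))) := by
    have := add_pow_le (zero_le_one (α := ℝ)) A0 k
    refine this.trans ?_
    rw [one_pow]
    apply mul_le_mul _ _ (by positivity) (by positivity)
    · exact pow_le_pow_right₀ (by norm_num) (by omega)
    · have : |w| ^ k ≤ 1 + |w| ^ (2 * m + 2) := by
        rcases le_total |w| 1 with hw | hw
        · have := pow_le_one₀ (n := k) A0 hw
          have : 0 ≤ |w| ^ (2 * m + 2) := by positivity
          linarith
        · have := pow_le_pow_right₀ hw (by omega : k ≤ 2 * m + 2)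
          linarith
      have : 0 ≤ |w| ^ (2 * m + 2) := by positivity
      linarith
  have s1 : (1 + (1 + h * w) + h ^ 2) * (w + h) ^ k - (1 + (1 + h * w)) * w ^ k
      = (2 + h * w) * ((w + h) ^ k - w ^ k) + h ^ 2 * (w + h) ^ k := by ring
  rw [s1, hw2, hw3]
  have s2 : (2 + h * w) * ((w + h) ^ k - w ^ k) ≤ (2 + h * |w|) * (h * k * (1 + |w|) ^ (2 * m)) := by
    refine (le_abs_self _).trans ?_
    rw [abs_mul]
    apply mul_le_mul _ d1 (abs_nonneg _) (by positivity)
    refine (abs_add_le _ _).trans ?_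
    rw [abs_mul, abs_of_pos hh]; simp
  have s3 : h ^ 2 * (w + h) ^ k ≤ h ^ 2 * (1 + |w|) ^ k :=
    mul_le_mul_of_nonneg_left ((le_abs_self _).trans d2) (by positivity)
  have s4 : (2 + h * |w|) * (h * k * (1 + |w|) ^ (2 * m)) ≤
      2 * h * k * (1 + |w|) ^ (2 * m) + h ^ 2 * k * (1 + |w|) ^ k := by
    have : (1 + |w|) ^ k = (1 + |w|) ^ (2 * m) * (1 + |w|) := by rw [hk, pow_succ]
    rw [this]
    have : 0 ≤ h ^ 2 * k * (1 + |w|) ^ (2 * m) := by positivity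
    nlinarith
  have s5 : (2 + h * w) * ((w + h) ^ k - w ^ k) + h ^ 2 * (w + h) ^ k ≤
      h * (2 * k * (1 + |w|) ^ (2 * m) + h * (k + 1) * (1 + |w|) ^ k) := by nlinarith
  refine s5.trans (mul_le_mul_of_nonneg_left ?_ hh.le)
  have kc : (k : ℝ) = 2 * m + 1 := by rw [hk]; push_cast; ring
  have t1 : 2 * k * (1 + |w|) ^ (2 * m) ≤ 2 * k * (2 ^ (2 * m) * (1 + |w| ^ (2 * m))) :=
    mul_le_mul_of_nonneg_left p1 (by positivity)
  have t2 : h * (k + 1) * (1 + |w|) ^ k ≤ h * (k + 1) * (2 ^ k * (2 * (1 + |w| ^ (2 * m + 2)))) :=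
    mul_le_mul_of_nonneg_left p2 (by positivity)
  have e1 : (2 : ℝ) ^ k = 2 * 2 ^ (2 * m) := by rw [hk, pow_succ]; ring
  have e2 : (2 : ℝ) ^ (2 * m + 3) = 8 * 2 ^ (2 * m) := by rw [pow_add]; ring
  refine (add_le_add t1 t2).trans ?_
  rw [e1, e2, kc]
  have u0 : (0 : ℝ) < 2 ^ (2 * m) := by positivity
  have u1 : 0 ≤ |w| ^ (2 * m) := by positivity
  have u2 : 0 ≤ |w| ^ (2 * m + 2) := by positivity
  generalize (2 : ℝ) ^ (2 * m) = P at *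
  generalize |w| ^ (2 * m) = a at *
  generalize |w| ^ (2 * m + 2) = b at *
  have hm : (0 : ℝ) ≤ m := by positivity
  have v : h * (2 * (m : ℝ) + 1 + 1) * (2 * P * (2 * (1 + b))) =
    P * (8 * (m + 1) * (h + h * b)) := by ring
  have v' : 2 * (2 * (m : ℝ) + 1) * (P * (1 + a)) + P * (8 * (m + 1) * (h + h * b)) =
    P * (2 * (2 * (m : ℝ) + 1) * (1 + a) + 8 * (m + 1) * (h + h * b)) := by ring
  have v'' : (2 * (m : ℝ) + 2) * (8 * P) * (1 + a + h * b) =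
    P * (16 * (m + 1) * (1 + a + h * b)) := by ring
  rw [v, v', v'']
  apply mul_le_mul_of_nonneg_left _ u0.le
  have hb : 0 ≤ h * b := by positivity
  nlinarith [mul_nonneg hm u1, mul_nonneg hm hb, mul_nonneg hm (sub_nonneg.2 h1)]

lemma cmpQ_even_bdd {ν : ℝ} (hν : 0 < ν) (m : ℕ) :
    ∃ C : ℝ, ∀ᶠ h in 𝓝[>] (0 : ℝ), cmpQ ν (2 * m) h ≤ C := by
  induction m with
  | zero =>
    refine ⟨1, ?_⟩
    filter_upwards [self_mem_nhdsWithin] with h hh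
    simp [cmpQ, cmpEx_const hν hh]
  | succ m ih =>
    obtain ⟨C, hC⟩ := ih
    obtain ⟨D, hD, HD⟩ := cmp_pointwise m
    have c0 : 0 < min 1 ν := lt_min one_pos hν
    refine ⟨2 * D * (1 + C) / min 1 ν, ?_⟩
    have hsmall : Set.Ioo (0 : ℝ) (min 1 (min 1 ν / (2 * D))) ∈ 𝓝[>] (0 : ℝ) :=
      Ioo_mem_nhdsGT (by positivity)
    filter_upwards [hC, hsmall] with h hq hh2
    have hh : 0 < h := hh2.1
    have h1 : h ≤ 1 := hh2.2.le.trans (min_le_left _ _)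
    have h2 : h < min 1 ν / (2 * D) := hh2.2.trans_le (min_le_right _ _)
    rw [lt_div_iff₀ (by positivity)] at h2
    have gW := cmpW_good h
    have gx : CmpGood (fun j => 1 + (1 + h * cmpW h j)) :=
      (CmpGood.const 1).add ((CmpGood.const 1).add ((CmpGood.const h).mul gW))
    have gf : CmpGood (fun j => (1 + (1 + h * cmpW h j)) * cmpW h j ^ (2 * m + 1)) :=
      gx.mul (gW.pow _)
    have st := cmpEx_stein hν hh gf
    have gl := (CmpGood.rpow hν (sq_nonneg h)).mul gf
    have gr : CmpGood (fun j => (1 + (1 + h * cmpW h j) + h ^ 2) * (cmpW h j + h) ^ (2 * m + 1)) :=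
      (gx.add (CmpGood.const _)).mul ((gW.add (CmpGood.const h)).pow _)
    have er : (fun j : ℕ => (1 + (1 + h * cmpW h (j + 1))) * cmpW h (j + 1) ^ (2 * m + 1)) =
        fun j => (1 + (1 + h * cmpW h j) + h ^ 2) * (cmpW h j + h) ^ (2 * m + 1) := by
      funext j; rw [cmpW_succ]; ring
    rw [er] at st
    have e3 : cmpEx ν h (fun j => ((j : ℝ) * h ^ 2) ^ ν *
          ((1 + (1 + h * cmpW h j)) * cmpW h j ^ (2 * m + 1)) -
          (1 + (1 + h * cmpW h j)) * cmpW h j ^ (2 * m + 1)) =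
        cmpEx ν h (fun j => (1 + (1 + h * cmpW h j) + h ^ 2) * (cmpW h j + h) ^ (2 * m + 1) -
          (1 + (1 + h * cmpW h j)) * cmpW h j ^ (2 * m + 1)) := by
      rw [cmpEx_sub hν hh gl gf, cmpEx_sub hν hh gr gf, st]
    have low := cmpEx_mono hν hh ((CmpGood.const (min 1 ν * h)).mul (gW.pow (2 * m + 2)))
      (gl.sub gf) (fun j => by
        have hx : (0 : ℝ) ≤ (j : ℝ) * h ^ 2 := by positivity
        have := cmp_coercive hν hx
        rw [cmpW_x hh] at this ⊢
        set w := cmpW h j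
        have hw : 0 ≤ w ^ (2 * m) / h := by
          apply div_nonneg _ hh.le
          exact Even.pow_nonneg (by simp) _
        have := mul_le_mul_of_nonneg_left this hw
        have l1 : w ^ (2 * m) / h * (min 1 ν * (1 + h * w - 1) ^ 2) =
            min 1 ν * h * w ^ (2 * m + 2) := by
          field_simp; ring
        have l2 : w ^ (2 * m) / h * (((1 + h * w) ^ ν - 1) * (1 + (1 + h * w)) * (1 + h * w - 1)) =
            (1 + h * w) ^ ν * ((1 + (1 + h * w)) * w ^ (2 * m + 1)) -
            (1 + (1 + h * w)) * w ^ (2 * m + 1) := by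
          field_simp; ring
        rw [l1, l2] at this
        exact this)
    have gup : CmpGood (fun j => 1 + cmpW h j ^ (2 * m) + h * cmpW h j ^ (2 * m + 2)) :=
      ((CmpGood.const 1).add (gW.pow _)).add ((CmpGood.const h).mul (gW.pow _))
    have up := cmpEx_mono hν hh (gr.sub gf)
      ((CmpGood.const h).mul ((CmpGood.const D).mul gup)) (fun j => HD h hh h1 (cmpW h j))
    rw [cmpEx_mul_left, cmpEx_mul_left, cmpEx_add hν hh ((CmpGood.const 1).add (gW.pow _))
      ((CmpGood.const h).mul (gW.pow _)), cmpEx_add hν hh (CmpGood.const 1) (gW.pow _),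
      cmpEx_const hν hh, cmpEx_mul_left] at up
    rw [cmpEx_mul_left] at low
    rw [e3] at low
    have fin := low.trans up
    change cmpEx ν h (fun j => cmpW h j ^ (2 * (m + 1))) ≤ _
    change cmpEx ν h (fun j => cmpW h j ^ (2 * m)) ≤ C at hq
    rw [show 2 * (m + 1) = 2 * m + 2 by ring]
    have pos : 0 ≤ cmpEx ν h (fun j => cmpW h j ^ (2 * m + 2)) := by
      have := cmpEx_mono hν hh (CmpGood.const 0) (gW.pow (2 * m + 2))
        (fun j => Even.pow_nonneg (by simp [parity_simps]) _)
      rwa [cmpEx_const hν hh] at this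
    set Q := cmpEx ν h (fun j => cmpW h j ^ (2 * m + 2))
    set Q' := cmpEx ν h (fun j => cmpW h j ^ (2 * m))
    have fin2 : min 1 ν * Q ≤ D * (1 + Q' + h * Q) := by
      have : h * (min 1 ν * Q) ≤ h * (D * (1 + Q' + h * Q)) := by linarith
      exact le_of_mul_le_mul_left this hh
    rw [le_div_iff₀ c0]
    nlinarith [mul_le_mul_of_nonneg_left hq hD.le, mul_le_mul_of_nonneg_right h2.le pos]

lemma cmpEx_abs_bdd {ν : ℝ} (hν : 0 < ν) (n : ℕ) :
    ∃ C : ℝ, ∀ᶠ h in 𝓝[>] (0 : ℝ), cmpEx ν h (fun j => |cmpW h j| ^ n) ≤ C := by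
  obtain ⟨C, hC⟩ := cmpQ_even_bdd hν n
  refine ⟨1 + C, ?_⟩
  filter_upwards [hC, self_mem_nhdsWithin] with h hq hh
  have hh : 0 < h := hh
  have := cmpEx_mono hν hh ((cmpW_good h).abs.pow n)
    ((CmpGood.const 1).add ((cmpW_good h).pow (2 * n))) (fun j => by
      have e : cmpW h j ^ (2 * n) = (|cmpW h j| ^ n) ^ 2 := by
        rw [← pow_mul, mul_comm n 2, Even.pow_abs (by simp)]
      show |cmpW h j| ^ n ≤ 1 + cmpW h j ^ (2 * n)
      rw [e]
      nlinarith [sq_nonneg (|cmpW h j| ^ n - 1)])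
  rw [cmpEx_add hν hh (CmpGood.const 1) ((cmpW_good h).pow (2 * n)), cmpEx_const hν hh] at this
  exact this.trans (by unfold cmpQ at hq; linarith)

lemma cmpQ_bdd {ν : ℝ} (hν : 0 < ν) (k : ℕ) :
    (cmpQ ν k) =O[𝓝[>] (0 : ℝ)] (fun _ => (1 : ℝ)) := by
  obtain ⟨C, hC⟩ := cmpEx_abs_bdd hν k
  refine IsBigO.of_bound C ?_
  filter_upwards [hC, self_mem_nhdsWithin] with h hq hh
  have hh : 0 < h := hh
  have := cmpEx_abs_le hν hh ((cmpW_good h).pow k) ((cmpW_good h).abs.pow k)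
    (fun j => by rw [abs_pow])
  simpa [cmpQ] using this.trans hq

/-- The expanded Stein equation. -/
lemma cmpQ_stein {ν : ℝ} (hν : 0 < ν) (k N : ℕ) :
    (fun h => ∑ i ∈ Finset.range N, Ring.choose ν i * h ^ i * cmpQ ν (k + i) h -
      ∑ r ∈ Finset.range (k + 1), (k.choose r : ℝ) * h ^ r * cmpQ ν (k - r) h)
      =O[𝓝[>] (0 : ℝ)] (fun h => h ^ N) := by
  obtain ⟨C, M, hC, HT⟩ := cmp_taylor hν N
  obtain ⟨B1, hB1⟩ := cmpEx_abs_bdd hν (N + k)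
  obtain ⟨B2, hB2⟩ := cmpEx_abs_bdd hν (N + M + k)
  refine IsBigO.of_bound (C * (B1 + B2)) ?_
  filter_upwards [hB1, hB2, Ioo_mem_nhdsGT (one_pos : (0 : ℝ) < 1)] with h b1 b2 hh2
  have hh : 0 < h := hh2.1
  have h1 : h ≤ 1 := hh2.2.le
  have gW := cmpW_good h
  have st := cmpEx_stein hν hh (gW.pow k)
  simp only [cmpW_succ] at st
  have eR : cmpEx ν h (fun j => (cmpW h j + h) ^ k) =
      ∑ r ∈ Finset.range (k + 1), (k.choose r : ℝ) * h ^ r * cmpQ ν (k - r) h := by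
    have : (fun j => (cmpW h j + h) ^ k) =
        fun j => ∑ r ∈ Finset.range (k + 1), (k.choose r : ℝ) * h ^ r * cmpW h j ^ (k - r) := by
      funext j
      rw [add_comm, add_pow]
      exact Finset.sum_congr rfl fun r _ => by ring
    rw [this, cmpEx_sum hν hh _ (fun r _ => (CmpGood.const _).mul (gW.pow _))]
    exact Finset.sum_congr rfl fun r _ => cmpEx_mul_left _ _
  have gS : CmpGood (fun j => ∑ i ∈ Finset.range N, Ring.choose ν i * h ^ i * cmpW h j ^ (k + i)) :=
    CmpGood.sum _ (fun r _ => (CmpGood.const _).mul (gW.pow _))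
  have eL : cmpEx ν h (fun j => ∑ i ∈ Finset.range N, Ring.choose ν i * h ^ i * cmpW h j ^ (k + i)) =
      ∑ i ∈ Finset.range N, Ring.choose ν i * h ^ i * cmpQ ν (k + i) h := by
    rw [cmpEx_sum hν hh _ (fun r _ => (CmpGood.const _).mul (gW.pow _))]
    exact Finset.sum_congr rfl fun r _ => cmpEx_mul_left _ _
  have gX := (CmpGood.rpow hν (sq_nonneg h)).mul (gW.pow k)
  rw [← eR, ← eL, ← st, ← cmpEx_sub hν hh gS gX]
  have gB : CmpGood (fun j => (C * h ^ N) * (|cmpW h j| ^ (N + k) + |cmpW h j| ^ (N + M + k))) :=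
    (CmpGood.const _).mul ((gW.abs.pow _).add (gW.abs.pow _))
  have main := cmpEx_abs_le hν hh (gS.sub gX) gB (fun j => by
    have hx : (0 : ℝ) ≤ (j : ℝ) * h ^ 2 := by positivity
    rw [cmpW_x hh] at hx ⊢
    set w := cmpW h j
    have T := HT (h * w) (by linarith)
    have e : ∑ i ∈ Finset.range N, Ring.choose ν i * h ^ i * w ^ (k + i) - (1 + h * w) ^ ν * w ^ k =
        -(((1 + h * w) ^ ν - ∑ i ∈ Finset.range N, Ring.choose ν i * (h * w) ^ i) * w ^ k) := by
      rw [sub_mul, Finset.sum_mul, neg_sub]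
      congr 1
      exact Finset.sum_congr rfl fun i _ => by ring
    rw [e, abs_neg, abs_mul, abs_pow]
    refine (mul_le_mul_of_nonneg_right T (by positivity)).trans ?_
    rw [abs_mul, abs_of_pos hh]
    have hM : h ^ (N + M) ≤ h ^ N := pow_le_pow_of_le_one hh.le h1 (by omega)
    have hp : 0 ≤ |w| ^ (N + M + k) := by positivity
    have e1 : C * ((h * |w|) ^ N + (h * |w|) ^ (N + M)) * |w| ^ k =
      C * (h ^ N * |w| ^ (N + k) + h ^ (N + M) * |w| ^ (N + M + k)) := by
      rw [mul_pow, mul_pow]; ring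
    rw [e1, mul_assoc, mul_add (h ^ N)]
    apply mul_le_mul_of_nonneg_left _ hC
    exact add_le_add le_rfl (mul_le_mul_of_nonneg_right hM hp))
  rw [cmpEx_mul_left, cmpEx_add hν hh (gW.abs.pow _) (gW.abs.pow _)] at main
  rw [Real.norm_eq_abs, Real.norm_of_nonneg (by positivity : 0 ≤ h ^ N)]
  refine main.trans ?_
  have : 0 ≤ C * h ^ N := by positivity
  nlinarith [mul_le_mul_of_nonneg_left (add_le_add b1 b2) this]

open Filter Topology Asymptotics

/-! ### Coefficients of the asymptotic expansions -/

/-- `cmpA ν s k` is the coefficient of `h^s` in the expansion of the `k`-th standardised moment. -/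
noncomputable def cmpA (ν : ℝ) : ℕ → ℕ → ℝ
  | s, 0 => if s = 0 then 1 else 0
  | s, k + 1 =>
    (∑ r : Fin k, (if (r : ℕ) ≤ s then (k.choose (r + 1) : ℝ) * cmpA ν (s - r) (k - 1 - r) else 0) -
      ∑ r : Fin s, Ring.choose ν (r + 2) * cmpA ν (s - 1 - r) (k + r + 2)) / ν
termination_by s k => (s, k)
decreasing_by
  · have := r.2
    simp only [Prod.lex_def]
    omega
  · have := r.2
    simp only [Prod.lex_def]
    omega

lemma cmpA_zero (ν : ℝ) (s : ℕ) : cmpA ν s 0 = if s = 0 then 1 else 0 := by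
  rw [cmpA]

lemma cmpA_succ (ν : ℝ) (s k : ℕ) : cmpA ν s (k + 1) =
    (∑ r ∈ Finset.range k,
        (if r ≤ s then (k.choose (r + 1) : ℝ) * cmpA ν (s - r) (k - 1 - r) else 0) -
      ∑ r ∈ Finset.range s, Ring.choose ν (r + 2) * cmpA ν (s - 1 - r) (k + r + 2)) / ν := by
  rw [cmpA, Finset.sum_range, Finset.sum_range]

lemma cmpA_odd (ν : ℝ) (s : ℕ) : ∀ k, Odd (s + k) → cmpA ν s k = 0 := by
  induction s using Nat.strong_induction_on with
  | _ s ihs =>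
  intro k
  induction k using Nat.strong_induction_on with
  | _ k ihk =>
  intro ho
  rcases k with _ | k
  · rw [cmpA_zero, if_neg]
    rintro rfl
    simp at ho
  · rw [cmpA_succ, Finset.sum_eq_zero, Finset.sum_eq_zero]
    · simp
    · intro r hr
      have hr := Finset.mem_range.1 hr
      rw [ihs (s - 1 - r) (by omega) _ (by rw [Nat.odd_iff] at *; omega), mul_zero]
    · intro r hr
      have hr := Finset.mem_range.1 hr
      split_ifs with h
      · have : cmpA ν (s - r) (k - 1 - r) = 0 := by
          have hod : Odd (s - r + (k - 1 - r)) := by rw [Nat.odd_iff] at *; omega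
          rcases Nat.eq_zero_or_pos r with rfl | hr0
          · exact ihk _ (by omega) hod
          · exact ihs _ (by omega) _ hod
        rw [this, mul_zero]
      · rfl

/-- Asymptotic expansion to order `T`. -/
def CmpAsy (T : ℕ) (f : ℝ → ℝ) (b : ℕ → ℝ) : Prop :=
  (fun h => f h - ∑ s ∈ Finset.range T, b s * h ^ s) =O[𝓝[>] (0 : ℝ)] (fun h => h ^ T)

lemma cmp_pow_isBigO {m n : ℕ} (hmn : m ≤ n) :
    (fun h : ℝ => h ^ n) =O[𝓝[>] (0 : ℝ)] (fun h => h ^ m) := by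
  refine IsBigO.of_bound 1 ?_
  filter_upwards [Ioo_mem_nhdsGT (one_pos : (0 : ℝ) < 1)] with h hh
  rw [Real.norm_of_nonneg (pow_nonneg hh.1.le _), Real.norm_of_nonneg (pow_nonneg hh.1.le _), one_mul]
  exact pow_le_pow_of_le_one hh.1.le hh.2.le hmn

namespace CmpAsy

lemma mono {T T' : ℕ} {f : ℝ → ℝ} {b : ℕ → ℝ} (hf : CmpAsy T f b) (hT : T' ≤ T) : CmpAsy T' f b := by
  have h1 := IsBigO.trans hf (cmp_pow_isBigO hT)
  have h2 : (fun h : ℝ => ∑ s ∈ Finset.Ico T' T, b s * h ^ s) =O[𝓝[>] (0 : ℝ)] (fun h => h ^ T') := by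
    have := IsBigO.sum (s := Finset.Ico T' T) (A := fun s (h : ℝ) => b s * h ^ s)
      (g := fun h : ℝ => h ^ T') (l := 𝓝[>] (0 : ℝ)) ?_
    · refine this.congr_left fun h => ?_
      rw [Finset.sum_apply]
    intro i hi
    exact (cmp_pow_isBigO (Finset.mem_Ico.1 hi).1).const_mul_left _
  refine (h1.add h2).congr_left fun h => ?_
  have := Finset.sum_range_add_sum_Ico (fun s => b s * h ^ s) hT
  rw [← this]; ring

lemma add {T : ℕ} {f g : ℝ → ℝ} {b c : ℕ → ℝ} (hf : CmpAsy T f b) (hg : CmpAsy T g c) :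
    CmpAsy T (fun h => f h + g h) (fun s => b s + c s) := by
  refine (IsBigO.add hf hg).congr_left fun h => ?_
  simp only [add_mul, Finset.sum_add_distrib]; ring

lemma const_mul {T : ℕ} {f : ℝ → ℝ} {b : ℕ → ℝ} (hf : CmpAsy T f b) (a : ℝ) :
    CmpAsy T (fun h => a * f h) (fun s => a * b s) := by
  refine (IsBigO.const_mul_left hf a).congr_left fun h => ?_
  simp only [mul_sub, Finset.mul_sum, mul_assoc]

lemma sub {T : ℕ} {f g : ℝ → ℝ} {b c : ℕ → ℝ} (hf : CmpAsy T f b) (hg : CmpAsy T g c) :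
    CmpAsy T (fun h => f h - g h) (fun s => b s - c s) := by
  refine (IsBigO.sub hf hg).congr_left fun h => ?_
  simp only [sub_mul, Finset.sum_sub_distrib]; ring

lemma sum {ι : Type*} {T : ℕ} (S : Finset ι) {f : ι → ℝ → ℝ} {b : ι → ℕ → ℝ}
    (hf : ∀ i ∈ S, CmpAsy T (f i) (b i)) :
    CmpAsy T (fun h => ∑ i ∈ S, f i h) (fun s => ∑ i ∈ S, b i s) := by
  refine (IsBigO.sum hf).congr_left fun h => ?_
  rw [Finset.sum_apply, Finset.sum_sub_distrib, Finset.sum_comm]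
  simp only [Finset.sum_mul]

lemma shift {T : ℕ} {f : ℝ → ℝ} {b : ℕ → ℝ} (hf : CmpAsy T f b) (r : ℕ) :
    CmpAsy (r + T) (fun h => h ^ r * f h) (fun s => if r ≤ s then b (s - r) else 0) := by
  have h1 := (isBigO_refl (fun h : ℝ => h ^ r) (𝓝[>] (0 : ℝ))).mul hf
  unfold CmpAsy
  simp only [pow_add]
  refine h1.congr_left fun h => ?_
  rw [Finset.sum_range_add, Finset.sum_eq_zero (s := Finset.range r), zero_add, mul_sub, Finset.mul_sum]
  · congr 1
    refine Finset.sum_congr rfl fun i _ => ?_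
    simp [pow_add]; ring
  · intro i hi
    have := Finset.mem_range.1 hi
    rw [if_neg (by omega), zero_mul]

lemma congr {T : ℕ} {f g : ℝ → ℝ} {b c : ℕ → ℝ} (hf : CmpAsy T f b)
    (hfg : (fun h => g h - f h) =O[𝓝[>] (0 : ℝ)] (fun h => h ^ T)) (hbc : ∀ s < T, b s = c s) :
    CmpAsy T g c := by
  refine (IsBigO.add hf hfg).congr_left fun h => ?_
  rw [Finset.sum_congr rfl fun s hs => by rw [hbc s (Finset.mem_range.1 hs)]]
  ring

end CmpAsy

lemma cmpQ_rec {ν : ℝ} (hν : 0 < ν) (k T : ℕ) :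
    (fun h => ν * cmpQ ν (k + 1) h -
      (∑ r ∈ Finset.range k, (k.choose (r + 1) : ℝ) * (h ^ r * cmpQ ν (k - 1 - r) h) -
       ∑ r ∈ Finset.range T, Ring.choose ν (r + 2) * (h ^ (r + 1) * cmpQ ν (k + r + 2) h)))
      =O[𝓝[>] (0 : ℝ)] (fun h => h ^ (T + 1)) := by
  have st := cmpQ_stein hν k (T + 2)
  have h1 := (isBigO_refl (fun h : ℝ => h⁻¹) (𝓝[>] (0 : ℝ))).mul st
  refine h1.congr' ?_ ?_
  · filter_upwards [self_mem_nhdsWithin] with h hh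
    have hh : 0 < h := hh
    rw [Finset.sum_range_succ' _ (T + 1), Finset.sum_range_succ' _ T, Finset.sum_range_succ' _ k]
    simp only [Ring.choose_zero_right, zero_add, Ring.choose_one_right, pow_zero, add_zero,
      Nat.choose_zero_right, Nat.cast_one, Nat.sub_zero, pow_one]
    have e1 : ∑ i ∈ Finset.range T, Ring.choose ν (i + 1 + 1) * h ^ (i + 1 + 1) *
        cmpQ ν (k + (i + 1 + 1)) h =
        h * ∑ r ∈ Finset.range T, Ring.choose ν (r + 2) * (h ^ (r + 1) * cmpQ ν (k + r + 2) h) := by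
      rw [Finset.mul_sum]
      refine Finset.sum_congr rfl fun i _ => ?_
      rw [show k + (i + 1 + 1) = k + i + 2 by ring, show i + 1 + 1 = i + 2 by ring]
      ring
    have e2 : ∑ i ∈ Finset.range k, (k.choose (i + 1) : ℝ) * h ^ (i + 1) * cmpQ ν (k - (i + 1)) h =
        h * ∑ r ∈ Finset.range k, (k.choose (r + 1) : ℝ) * (h ^ r * cmpQ ν (k - 1 - r) h) := by
      rw [Finset.mul_sum]
      refine Finset.sum_congr rfl fun i _ => ?_
      rw [show k - (i + 1) = k - 1 - i by omega]
      ring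
    rw [e1, e2]
    field_simp
    ring
  · filter_upwards [self_mem_nhdsWithin] with h hh
    have hh : 0 < h := hh
    rw [pow_succ _ (T + 1)]
    field_simp

/-- All standardised moments have full asymptotic expansions. -/
lemma cmpQ_asy {ν : ℝ} (hν : 0 < ν) (T : ℕ) : ∀ k, CmpAsy T (cmpQ ν k) (fun s => cmpA ν s k) := by
  induction T with
  | zero =>
    intro k
    simpa [CmpAsy] using cmpQ_bdd hν k
  | succ T ih =>
    intro k
    induction k using Nat.strong_induction_on with
    | _ k ihk =>
    rcases k with _ | k
    · unfold CmpAsy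
      refine (isBigO_zero _ _).congr' ?_ (EventuallyEq.refl _ _)
      filter_upwards [self_mem_nhdsWithin] with h hh
      rw [Finset.sum_eq_single 0]
      · simp [cmpQ, cmpA_zero, cmpEx_const hν hh]
      · intro s _ hs
        simp [cmpA_zero, hs]
      · simp
    · have h1 := CmpAsy.sum (T := T + 1) (Finset.range k) (fun r hr =>
        (((ihk (k - 1 - r) (by have := Finset.mem_range.1 hr; omega)).shift r).mono
          (by omega : T + 1 ≤ r + (T + 1))).const_mul (k.choose (r + 1) : ℝ))
      have h2 := CmpAsy.sum (T := T + 1) (Finset.range T) (fun r hr =>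
        (((ih (k + r + 2)).shift (r + 1)).mono
          (by omega : T + 1 ≤ (r + 1) + T)).const_mul (Ring.choose ν (r + 2)))
      have h3 := ((h1.sub h2).congr (cmpQ_rec hν k T) (fun s _ => rfl)).const_mul (1 / ν)
      refine h3.congr ?_ ?_
      · refine (isBigO_zero _ _).congr_left fun h => ?_
        field_simp
        ring
      · intro s hs
        rw [cmpA_succ, one_div, div_eq_inv_mul]
        congr 2
        · refine Finset.sum_congr rfl fun r _ => ?_
          split_ifs <;> simp
        · symm
          apply Finset.sum_subset_zero_on_sdiff (Finset.range_mono (by omega : s ≤ T))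
          · intro r hr
            simp only [Finset.mem_sdiff, Finset.mem_range] at hr
            rw [if_neg (by omega), mul_zero]
          · intro r hr
            have := Finset.mem_range.1 hr
            rw [if_pos (by omega), show s - 1 - r = s - (r + 1) by omega]


/-! ### Explicit coefficients -/

lemma cmp_choose_2 (ν : ℝ) : Ring.choose ν 2 = ν*(ν - 1) / 2 := by
  rw [cmp_choose_succ ν 1, Ring.choose_one_right]; push_cast; ring

lemma cmp_choose_3 (ν : ℝ) : Ring.choose ν 3 = ν*(ν - 1)*(ν - 2) / 6 := by
  rw [cmp_choose_succ ν 2, cmp_choose_2]; push_cast; ring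

lemma cmp_choose_4 (ν : ℝ) : Ring.choose ν 4 = ν*(ν - 1)*(ν - 2)*(ν - 3) / 24 := by
  rw [cmp_choose_succ ν 3, cmp_choose_3]; push_cast; ring

lemma cmp_choose_5 (ν : ℝ) : Ring.choose ν 5 = ν*(ν - 1)*(ν - 2)*(ν - 3)*(ν - 4) / 120 := by
  rw [cmp_choose_succ ν 4, cmp_choose_4]; push_cast; ring

lemma cmp_choose_6 (ν : ℝ) : Ring.choose ν 6 = ν*(ν - 1)*(ν - 2)*(ν - 3)*(ν - 4)*(ν - 5) / 720 := by
  rw [cmp_choose_succ ν 5, cmp_choose_5]; push_cast; ring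

lemma cmp_choose_7 (ν : ℝ) : Ring.choose ν 7 = ν*(ν - 1)*(ν - 2)*(ν - 3)*(ν - 4)*(ν - 5)*(ν - 6) / 5040 := by
  rw [cmp_choose_succ ν 6, cmp_choose_6]; push_cast; ring

lemma cmp_choose_8 (ν : ℝ) : Ring.choose ν 8 = ν*(ν - 1)*(ν - 2)*(ν - 3)*(ν - 4)*(ν - 5)*(ν - 6)*(ν - 7) / 40320 := by
  rw [cmp_choose_succ ν 7, cmp_choose_7]; push_cast; ring

lemma cmp_choose_9 (ν : ℝ) : Ring.choose ν 9 = ν*(ν - 1)*(ν - 2)*(ν - 3)*(ν - 4)*(ν - 5)*(ν - 6)*(ν - 7)*(ν - 8) / 362880 := by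
  rw [cmp_choose_succ ν 8, cmp_choose_8]; push_cast; ring

lemma cmpA_0_2 {ν : ℝ} (hν : ν ≠ 0) : cmpA ν 0 2 =
    (1) / (1 * ν) := by
  rw [cmpA_succ]
  simp [Finset.sum_range_succ, cmpA_zero, Nat.choose]
  try field_simp
  try ring

lemma cmpA_0_4 {ν : ℝ} (hν : ν ≠ 0) : cmpA ν 0 4 =
    (3) / (1 * ν ^ 2) := by
  rw [cmpA_succ]
  simp [Finset.sum_range_succ, cmpA_zero, cmpA_0_2 hν, Nat.choose]
  try field_simp
  try ring

lemma cmpA_0_6 {ν : ℝ} (hν : ν ≠ 0) : cmpA ν 0 6 =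
    (15) / (1 * ν ^ 3) := by
  rw [cmpA_succ]
  simp [Finset.sum_range_succ, cmpA_zero, cmpA_0_4 hν, Nat.choose]
  try field_simp
  try ring

lemma cmpA_0_8 {ν : ℝ} (hν : ν ≠ 0) : cmpA ν 0 8 =
    (105) / (1 * ν ^ 4) := by
  rw [cmpA_succ]
  simp [Finset.sum_range_succ, cmpA_zero, cmpA_0_6 hν, Nat.choose]
  try field_simp
  try ring

lemma cmpA_0_10 {ν : ℝ} (hν : ν ≠ 0) : cmpA ν 0 10 =
    (945) / (1 * ν ^ 5) := by
  rw [cmpA_succ]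
  simp [Finset.sum_range_succ, cmpA_zero, cmpA_0_8 hν, Nat.choose]
  try field_simp
  try ring

lemma cmpA_0_12 {ν : ℝ} (hν : ν ≠ 0) : cmpA ν 0 12 =
    (10395) / (1 * ν ^ 6) := by
  rw [cmpA_succ]
  simp [Finset.sum_range_succ, cmpA_zero, cmpA_0_10 hν, Nat.choose]
  try field_simp
  try ring

lemma cmpA_1_1 {ν : ℝ} (hν : ν ≠ 0) : cmpA ν 1 1 =
    (-ν + 1) / (2 * ν) := by
  rw [cmpA_succ]
  simp [Finset.sum_range_succ, cmpA_zero, cmpA_0_2 hν, cmp_choose_2]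
  try field_simp
  try ring

lemma cmpA_1_3 {ν : ℝ} (hν : ν ≠ 0) : cmpA ν 1 3 =
    (-3 * ν + 5) / (2 * ν ^ 2) := by
  rw [cmpA_succ]
  simp [Finset.sum_range_succ, cmpA_zero, cmpA_0_4 hν, cmpA_1_1 hν, cmp_choose_2, Nat.choose]
  try field_simp
  try ring

lemma cmpA_1_5 {ν : ℝ} (hν : ν ≠ 0) : cmpA ν 1 5 =
    (-15 * ν + 35) / (2 * ν ^ 3) := by
  rw [cmpA_succ]
  simp [Finset.sum_range_succ, cmpA_zero, cmpA_0_2 hν, cmpA_0_6 hν, cmpA_1_3 hν, cmp_choose_2, Nat.choose]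
  try field_simp
  try ring

lemma cmpA_1_7 {ν : ℝ} (hν : ν ≠ 0) : cmpA ν 1 7 =
    (-105 * ν + 315) / (2 * ν ^ 4) := by
  rw [cmpA_succ]
  simp [Finset.sum_range_succ, cmpA_zero, cmpA_0_4 hν, cmpA_0_8 hν, cmpA_1_5 hν, cmp_choose_2, Nat.choose]
  try field_simp
  try ring

lemma cmpA_1_9 {ν : ℝ} (hν : ν ≠ 0) : cmpA ν 1 9 =
    (-945 * ν + 3465) / (2 * ν ^ 5) := by
  rw [cmpA_succ]
  simp [Finset.sum_range_succ, cmpA_zero, cmpA_0_6 hν, cmpA_0_10 hν, cmpA_1_7 hν, cmp_choose_2, Nat.choose]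
  try field_simp
  try ring

lemma cmpA_1_11 {ν : ℝ} (hν : ν ≠ 0) : cmpA ν 1 11 =
    (-10395 * ν + 45045) / (2 * ν ^ 6) := by
  rw [cmpA_succ]
  simp [Finset.sum_range_succ, cmpA_zero, cmpA_0_8 hν, cmpA_0_12 hν, cmpA_1_9 hν, cmp_choose_2, Nat.choose]
  try field_simp
  try ring

lemma cmpA_2_2 {ν : ℝ} (hν : ν ≠ 0) : cmpA ν 2 2 =
    (ν ^ 2 - 2 * ν + 1) / (4 * ν ^ 2) := by
  rw [cmpA_succ]
  simp [Finset.sum_range_succ, cmpA_zero, cmpA_0_4 hν, cmpA_1_3 hν, cmp_choose_2, cmp_choose_3, Nat.choose]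
  try field_simp
  try ring

lemma cmpA_2_4 {ν : ℝ} (hν : ν ≠ 0) : cmpA ν 2 4 =
    (3 * ν ^ 2 - 10 * ν + 9) / (2 * ν ^ 3) := by
  rw [cmpA_succ]
  simp [Finset.sum_range_succ, cmpA_zero, cmpA_0_6 hν, cmpA_1_1 hν, cmpA_1_5 hν, cmpA_2_2 hν, cmp_choose_2, cmp_choose_3, Nat.choose]
  try field_simp
  try ring

lemma cmpA_2_6 {ν : ℝ} (hν : ν ≠ 0) : cmpA ν 2 6 =
    (45 * ν ^ 2 - 210 * ν + 265) / (4 * ν ^ 4) := by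
  rw [cmpA_succ]
  simp [Finset.sum_range_succ, cmpA_zero, cmpA_0_2 hν, cmpA_0_8 hν, cmpA_1_3 hν, cmpA_1_7 hν, cmpA_2_4 hν, cmp_choose_2, cmp_choose_3, Nat.choose]
  try field_simp
  try ring

lemma cmpA_2_8 {ν : ℝ} (hν : ν ≠ 0) : cmpA ν 2 8 =
    (105 * ν ^ 2 - 630 * ν + 1015) / (1 * ν ^ 5) := by
  rw [cmpA_succ]
  simp [Finset.sum_range_succ, cmpA_zero, cmpA_0_4 hν, cmpA_0_10 hν, cmpA_1_5 hν, cmpA_1_9 hν, cmpA_2_6 hν, cmp_choose_2, cmp_choose_3, Nat.choose]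
  try field_simp
  try ring

lemma cmpA_2_10 {ν : ℝ} (hν : ν ≠ 0) : cmpA ν 2 10 =
    (4725 * ν ^ 2 - 34650 * ν + 67725) / (4 * ν ^ 6) := by
  rw [cmpA_succ]
  simp [Finset.sum_range_succ, cmpA_zero, cmpA_0_6 hν, cmpA_0_12 hν, cmpA_1_7 hν, cmpA_1_11 hν, cmpA_2_8 hν, cmp_choose_2, cmp_choose_3, Nat.choose]
  try field_simp
  try ring

lemma cmpA_3_1 {ν : ℝ} (hν : ν ≠ 0) : cmpA ν 3 1 =
    (-ν ^ 2 + 1) / (24 * ν ^ 2) := by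
  rw [cmpA_succ]
  simp [Finset.sum_range_succ, cmpA_zero, cmpA_0_4 hν, cmpA_1_3 hν, cmpA_2_2 hν, cmp_choose_2, cmp_choose_3, cmp_choose_4]
  try field_simp
  try ring

lemma cmpA_3_3 {ν : ℝ} (hν : ν ≠ 0) : cmpA ν 3 3 =
    (-ν ^ 3 + 2 * ν ^ 2 - 3 * ν + 2) / (8 * ν ^ 3) := by
  rw [cmpA_succ]
  simp [Finset.sum_range_succ, cmpA_zero, cmpA_0_6 hν, cmpA_1_5 hν, cmpA_2_4 hν, cmpA_3_1 hν, cmp_choose_2, cmp_choose_3, cmp_choose_4, Nat.choose]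
  try field_simp
  try ring

lemma cmpA_3_5 {ν : ℝ} (hν : ν ≠ 0) : cmpA ν 3 5 =
    (-10 * ν ^ 3 + 45 * ν ^ 2 - 90 * ν + 63) / (8 * ν ^ 4) := by
  rw [cmpA_succ]
  simp [Finset.sum_range_succ, cmpA_zero, cmpA_0_8 hν, cmpA_1_1 hν, cmpA_1_7 hν, cmpA_2_2 hν, cmpA_2_6 hν, cmpA_3_3 hν, cmp_choose_2, cmp_choose_3, cmp_choose_4, Nat.choose]
  try field_simp
  try ring

lemma cmpA_3_7 {ν : ℝ} (hν : ν ≠ 0) : cmpA ν 3 7 =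
    (-105 * ν ^ 3 + 700 * ν ^ 2 - 1855 * ν + 1708) / (8 * ν ^ 5) := by
  rw [cmpA_succ]
  simp [Finset.sum_range_succ, cmpA_zero, cmpA_0_2 hν, cmpA_0_10 hν, cmpA_1_3 hν, cmpA_1_9 hν, cmpA_2_4 hν, cmpA_2_8 hν, cmpA_3_5 hν, cmp_choose_2, cmp_choose_3, cmp_choose_4, Nat.choose]
  try field_simp
  try ring

lemma cmpA_3_9 {ν : ℝ} (hν : ν ≠ 0) : cmpA ν 3 9 =
    (-1260 * ν ^ 3 + 11025 * ν ^ 2 - 36540 * ν + 42119) / (8 * ν ^ 6) := by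
  rw [cmpA_succ]
  simp [Finset.sum_range_succ, cmpA_zero, cmpA_0_4 hν, cmpA_0_12 hν, cmpA_1_5 hν, cmpA_1_11 hν, cmpA_2_6 hν, cmpA_2_10 hν, cmpA_3_7 hν, cmp_choose_2, cmp_choose_3, cmp_choose_4, Nat.choose]
  try field_simp
  try ring

lemma cmpA_4_2 {ν : ℝ} (hν : ν ≠ 0) : cmpA ν 4 2 =
    (ν ^ 2 - 1) / (24 * ν ^ 2) := by
  rw [cmpA_succ]
  simp [Finset.sum_range_succ, cmpA_zero, cmpA_0_6 hν, cmpA_1_5 hν, cmpA_2_4 hν, cmpA_3_3 hν, cmp_choose_2, cmp_choose_3, cmp_choose_4, cmp_choose_5, Nat.choose]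
  try field_simp
  try ring

lemma cmpA_4_4 {ν : ℝ} (hν : ν ≠ 0) : cmpA ν 4 4 =
    (3 * ν ^ 4 + 10 * ν ^ 2 - 24 * ν + 11) / (48 * ν ^ 4) := by
  rw [cmpA_succ]
  simp [Finset.sum_range_succ, cmpA_zero, cmpA_0_8 hν, cmpA_1_7 hν, cmpA_2_6 hν, cmpA_3_1 hν, cmpA_3_5 hν, cmpA_4_2 hν, cmp_choose_2, cmp_choose_3, cmp_choose_4, cmp_choose_5, Nat.choose]
  try field_simp
  try ring

lemma cmpA_4_6 {ν : ℝ} (hν : ν ≠ 0) : cmpA ν 4 6 =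
    (15 * ν ^ 4 - 70 * ν ^ 3 + 230 * ν ^ 2 - 378 * ν + 219) / (16 * ν ^ 5) := by
  rw [cmpA_succ]
  simp [Finset.sum_range_succ, cmpA_zero, cmpA_0_10 hν, cmpA_1_1 hν, cmpA_1_9 hν, cmpA_2_2 hν, cmpA_2_8 hν, cmpA_3_3 hν, cmpA_3_7 hν, cmpA_4_4 hν, cmp_choose_2, cmp_choose_3, cmp_choose_4, cmp_choose_5, Nat.choose]
  try field_simp
  try ring

lemma cmpA_4_8 {ν : ℝ} (hν : ν ≠ 0) : cmpA ν 4 8 =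
    (105 * ν ^ 4 - 840 * ν ^ 3 + 3430 * ν ^ 2 - 6832 * ν + 5089) / (8 * ν ^ 6) := by
  rw [cmpA_succ]
  simp [Finset.sum_range_succ, cmpA_zero, cmpA_0_2 hν, cmpA_0_12 hν, cmpA_1_3 hν, cmpA_1_11 hν, cmpA_2_4 hν, cmpA_2_10 hν, cmpA_3_5 hν, cmpA_3_9 hν, cmpA_4_6 hν, cmp_choose_2, cmp_choose_3, cmp_choose_4, cmp_choose_5, Nat.choose]
  try field_simp
  try ring

lemma cmpA_5_1 {ν : ℝ} (hν : ν ≠ 0) : cmpA ν 5 1 =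
    (-ν ^ 2 + 1) / (24 * ν ^ 3) := by
  rw [cmpA_succ]
  simp [Finset.sum_range_succ, cmpA_zero, cmpA_0_6 hν, cmpA_1_5 hν, cmpA_2_4 hν, cmpA_3_3 hν, cmpA_4_2 hν, cmp_choose_2, cmp_choose_3, cmp_choose_4, cmp_choose_5, cmp_choose_6]
  try field_simp
  try ring

lemma cmpA_5_3 {ν : ℝ} (hν : ν ≠ 0) : cmpA ν 5 3 =
    (-3 * ν ^ 4 - 10 * ν ^ 2 + 13) / (96 * ν ^ 4) := by
  rw [cmpA_succ]
  simp [Finset.sum_range_succ, cmpA_zero, cmpA_0_8 hν, cmpA_1_7 hν, cmpA_2_6 hν, cmpA_3_5 hν, cmpA_4_4 hν, cmpA_5_1 hν, cmp_choose_2, cmp_choose_3, cmp_choose_4, cmp_choose_5, cmp_choose_6, Nat.choose]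
  try field_simp
  try ring

lemma cmpA_5_5 {ν : ℝ} (hν : ν ≠ 0) : cmpA ν 5 5 =
    (-3 * ν ^ 5 - 15 * ν ^ 4 + 10 * ν ^ 3 - 30 * ν ^ 2 - 55 * ν + 93) / (96 * ν ^ 5) := by
  rw [cmpA_succ]
  simp [Finset.sum_range_succ, cmpA_zero, cmpA_0_10 hν, cmpA_1_9 hν, cmpA_2_8 hν, cmpA_3_1 hν, cmpA_3_7 hν, cmpA_4_2 hν, cmpA_4_6 hν, cmpA_5_3 hν, cmp_choose_2, cmp_choose_3, cmp_choose_4, cmp_choose_5, cmp_choose_6, Nat.choose]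
  try field_simp
  try ring

lemma cmpA_5_7 {ν : ℝ} (hν : ν ≠ 0) : cmpA ν 5 7 =
    (-63 * ν ^ 5 + 210 * ν ^ 4 - 1050 * ν ^ 3 + 2744 * ν ^ 2 - 4599 * ν + 2854) / (96 * ν ^ 6) := by
  rw [cmpA_succ]
  simp [Finset.sum_range_succ, cmpA_zero, cmpA_0_12 hν, cmpA_1_1 hν, cmpA_1_11 hν, cmpA_2_2 hν, cmpA_2_10 hν, cmpA_3_3 hν, cmpA_3_9 hν, cmpA_4_4 hν, cmpA_4_8 hν, cmpA_5_5 hν, cmp_choose_2, cmp_choose_3, cmp_choose_4, cmp_choose_5, cmp_choose_6, Nat.choose]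
  try field_simp
  try ring

lemma cmpA_6_2 {ν : ℝ} (hν : ν ≠ 0) : cmpA ν 6 2 =
    (ν ^ 4 + 24 * ν ^ 3 + 22 * ν ^ 2 - 24 * ν - 23) / (576 * ν ^ 4) := by
  rw [cmpA_succ]
  simp [Finset.sum_range_succ, cmpA_zero, cmpA_0_8 hν, cmpA_1_7 hν, cmpA_2_6 hν, cmpA_3_5 hν, cmpA_4_4 hν, cmpA_5_3 hν, cmp_choose_2, cmp_choose_3, cmp_choose_4, cmp_choose_5, cmp_choose_6, cmp_choose_7, Nat.choose]
  try field_simp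
  try ring

lemma cmpA_6_4 {ν : ℝ} (hν : ν ≠ 0) : cmpA ν 6 4 =
    (2 * ν ^ 5 + ν ^ 4 + 24 * ν ^ 3 + 6 * ν ^ 2 - 26 * ν - 7) / (96 * ν ^ 5) := by
  rw [cmpA_succ]
  simp [Finset.sum_range_succ, cmpA_zero, cmpA_0_10 hν, cmpA_1_9 hν, cmpA_2_8 hν, cmpA_3_7 hν, cmpA_4_6 hν, cmpA_5_1 hν, cmpA_5_5 hν, cmpA_6_2 hν, cmp_choose_2, cmp_choose_3, cmp_choose_4, cmp_choose_5, cmp_choose_6, cmp_choose_7, Nat.choose]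
  try field_simp
  try ring

lemma cmpA_6_6 {ν : ℝ} (hν : ν ≠ 0) : cmpA ν 6 6 =
    (3 * ν ^ 6 + 42 * ν ^ 5 - 60 * ν ^ 4 + 420 * ν ^ 3 - 73 * ν ^ 2 - 558 * ν + 226) / (192 * ν ^ 6) := by
  rw [cmpA_succ]
  simp [Finset.sum_range_succ, cmpA_zero, cmpA_0_12 hν, cmpA_1_11 hν, cmpA_2_10 hν, cmpA_3_1 hν, cmpA_3_9 hν, cmpA_4_2 hν, cmpA_4_8 hν, cmpA_5_3 hν, cmpA_5_7 hν, cmpA_6_4 hν, cmp_choose_2, cmp_choose_3, cmp_choose_4, cmp_choose_5, cmp_choose_6, cmp_choose_7, Nat.choose]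
  try field_simp
  try ring

lemma cmpA_7_1 {ν : ℝ} (hν : ν ≠ 0) : cmpA ν 7 1 =
    (9 * ν ^ 4 - 170 * ν ^ 2 + 161) / (1920 * ν ^ 4) := by
  rw [cmpA_succ]
  simp [Finset.sum_range_succ, cmpA_zero, cmpA_0_8 hν, cmpA_1_7 hν, cmpA_2_6 hν, cmpA_3_5 hν, cmpA_4_4 hν, cmpA_5_3 hν, cmpA_6_2 hν, cmp_choose_2, cmp_choose_3, cmp_choose_4, cmp_choose_5, cmp_choose_6, cmp_choose_7, cmp_choose_8]
  try field_simp
  try ring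

lemma cmpA_7_3 {ν : ℝ} (hν : ν ≠ 0) : cmpA ν 7 3 =
    (-5 * ν ^ 5 - 38 * ν ^ 4 - 110 * ν ^ 3 - 580 * ν ^ 2 + 115 * ν + 618) / (1920 * ν ^ 5) := by
  rw [cmpA_succ]
  simp [Finset.sum_range_succ, cmpA_zero, cmpA_0_10 hν, cmpA_1_9 hν, cmpA_2_8 hν, cmpA_3_7 hν, cmpA_4_6 hν, cmpA_5_5 hν, cmpA_6_4 hν, cmpA_7_1 hν, cmp_choose_2, cmp_choose_3, cmp_choose_4, cmp_choose_5, cmp_choose_6, cmp_choose_7, cmp_choose_8, Nat.choose]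
  try field_simp
  try ring

lemma cmpA_7_5 {ν : ℝ} (hν : ν ≠ 0) : cmpA ν 7 5 =
    (-15 * ν ^ 6 - 30 * ν ^ 5 - 304 * ν ^ 4 - 180 * ν ^ 3 - 1723 * ν ^ 2 + 210 * ν + 2042) / (1152 * ν ^ 6) := by
  rw [cmpA_succ]
  simp [Finset.sum_range_succ, cmpA_zero, cmpA_0_12 hν, cmpA_1_11 hν, cmpA_2_10 hν, cmpA_3_9 hν, cmpA_4_8 hν, cmpA_5_1 hν, cmpA_5_7 hν, cmpA_6_2 hν, cmpA_6_6 hν, cmpA_7_3 hν, cmp_choose_2, cmp_choose_3, cmp_choose_4, cmp_choose_5, cmp_choose_6, cmp_choose_7, cmp_choose_8, Nat.choose]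
  try field_simp
  try ring

lemma cmpA_8_2 {ν : ℝ} (hν : ν ≠ 0) : cmpA ν 8 2 =
    (-27 * ν ^ 5 - 34 * ν ^ 4 + 510 * ν ^ 3 + 980 * ν ^ 2 - 483 * ν - 946) / (5760 * ν ^ 5) := by
  rw [cmpA_succ]
  simp [Finset.sum_range_succ, cmpA_zero, cmpA_0_10 hν, cmpA_1_9 hν, cmpA_2_8 hν, cmpA_3_7 hν, cmpA_4_6 hν, cmpA_5_5 hν, cmpA_6_4 hν, cmpA_7_3 hν, cmp_choose_2, cmp_choose_3, cmp_choose_4, cmp_choose_5, cmp_choose_6, cmp_choose_7, cmp_choose_8, cmp_choose_9, Nat.choose]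
  try field_simp
  try ring

lemma cmpA_8_4 {ν : ℝ} (hν : ν ≠ 0) : cmpA ν 8 4 =
    (15 * ν ^ 6 - 12 * ν ^ 5 + 259 * ν ^ 4 + 3720 * ν ^ 3 + 4045 * ν ^ 2 - 3708 * ν - 4319) / (5760 * ν ^ 6) := by
  rw [cmpA_succ]
  simp [Finset.sum_range_succ, cmpA_zero, cmpA_0_12 hν, cmpA_1_11 hν, cmpA_2_10 hν, cmpA_3_9 hν, cmpA_4_8 hν, cmpA_5_7 hν, cmpA_6_6 hν, cmpA_7_1 hν, cmpA_7_5 hν, cmpA_8_2 hν, cmp_choose_2, cmp_choose_3, cmp_choose_4, cmp_choose_5, cmp_choose_6, cmp_choose_7, cmp_choose_8, cmp_choose_9, Nat.choose]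
  try field_simp
  try ring

open Filter Topology Asymptotics

/-! ### Even expansions truncated at order ten -/

/-- `f = b0 + b1 h^2 + b2 h^4 + b3 h^6 + b4 h^8 + O(h^10)`. -/
def CmpEv (f : ℝ → ℝ) (b0 b1 b2 b3 b4 : ℝ) : Prop :=
  (fun h => f h - (b0 + b1 * h ^ 2 + b2 * h ^ 4 + b3 * h ^ 6 + b4 * h ^ 8))
    =O[𝓝[>] (0 : ℝ)] (fun h => h ^ 10)

lemma cmp_bdd_of_continuous {f : ℝ → ℝ} (hf : Continuous f) :
    f =O[𝓝[>] (0 : ℝ)] (fun _ => (1 : ℝ)) :=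
  (hf.continuousAt.tendsto.mono_left nhdsWithin_le_nhds).isBigO_one ℝ

namespace CmpEv

variable {f g : ℝ → ℝ} {b0 b1 b2 b3 b4 c0 c1 c2 c3 c4 : ℝ}

lemma bdd (hf : CmpEv f b0 b1 b2 b3 b4) : f =O[𝓝[>] (0 : ℝ)] (fun _ => (1 : ℝ)) := by
  have h1 : (fun h : ℝ => h ^ 10) =O[𝓝[>] (0 : ℝ)] (fun _ => (1 : ℝ)) :=
    cmp_bdd_of_continuous (by fun_prop)
  have h2 : (fun h : ℝ => b0 + b1 * h ^ 2 + b2 * h ^ 4 + b3 * h ^ 6 + b4 * h ^ 8)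
      =O[𝓝[>] (0 : ℝ)] (fun _ => (1 : ℝ)) := cmp_bdd_of_continuous (by fun_prop)
  refine ((IsBigO.trans hf h1).add h2).congr_left fun h => ?_
  ring

lemma tendsto (hf : CmpEv f b0 b1 b2 b3 b4) : Tendsto f (𝓝[>] (0 : ℝ)) (𝓝 b0) := by
  have h1 : Tendsto (fun h : ℝ => h ^ 10) (𝓝[>] (0 : ℝ)) (𝓝 0) := by
    have : Continuous (fun h : ℝ => h ^ 10) := by fun_prop
    simpa using (this.tendsto 0).mono_left nhdsWithin_le_nhds
  have h2 : Tendsto (fun h : ℝ => b0 + b1 * h ^ 2 + b2 * h ^ 4 + b3 * h ^ 6 + b4 * h ^ 8)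
      (𝓝[>] (0 : ℝ)) (𝓝 b0) := by
    have : Continuous (fun h : ℝ => b0 + b1 * h ^ 2 + b2 * h ^ 4 + b3 * h ^ 6 + b4 * h ^ 8) := by
      fun_prop
    simpa using (this.tendsto 0).mono_left nhdsWithin_le_nhds
  have h3 := (IsBigO.trans_tendsto hf h1).add h2
  rw [zero_add] at h3
  refine h3.congr fun h => ?_
  ring

lemma add (hf : CmpEv f b0 b1 b2 b3 b4) (hg : CmpEv g c0 c1 c2 c3 c4) :
    CmpEv (fun h => f h + g h) (b0 + c0) (b1 + c1) (b2 + c2) (b3 + c3) (b4 + c4) := by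
  refine (IsBigO.add hf hg).congr_left fun h => ?_
  ring

lemma sub (hf : CmpEv f b0 b1 b2 b3 b4) (hg : CmpEv g c0 c1 c2 c3 c4) :
    CmpEv (fun h => f h - g h) (b0 - c0) (b1 - c1) (b2 - c2) (b3 - c3) (b4 - c4) := by
  refine (IsBigO.sub hf hg).congr_left fun h => ?_
  ring

lemma const_mul (hf : CmpEv f b0 b1 b2 b3 b4) (a : ℝ) :
    CmpEv (fun h => a * f h) (a * b0) (a * b1) (a * b2) (a * b3) (a * b4) := by
  refine (IsBigO.const_mul_left hf a).congr_left fun h => ?_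
  ring

lemma mul (hf : CmpEv f b0 b1 b2 b3 b4) (hg : CmpEv g c0 c1 c2 c3 c4) :
    CmpEv (fun h => f h * g h) (b0 * c0) (b0 * c1 + b1 * c0) (b0 * c2 + b1 * c1 + b2 * c0)
      (b0 * c3 + b1 * c2 + b2 * c1 + b3 * c0) (b0 * c4 + b1 * c3 + b2 * c2 + b3 * c1 + b4 * c0) := by
  have h1 := IsBigO.mul hf hg.bdd
  have hp : (fun h : ℝ => b0 + b1 * h ^ 2 + b2 * h ^ 4 + b3 * h ^ 6 + b4 * h ^ 8)
      =O[𝓝[>] (0 : ℝ)] (fun _ => (1 : ℝ)) := cmp_bdd_of_continuous (by fun_prop)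
  have h2 := IsBigO.mul hp hg
  have hr : (fun h : ℝ => (b1 * c4 + b2 * c3 + b3 * c2 + b4 * c1) +
      (b2 * c4 + b3 * c3 + b4 * c2) * h ^ 2 + (b3 * c4 + b4 * c3) * h ^ 4 + b4 * c4 * h ^ 6)
      =O[𝓝[>] (0 : ℝ)] (fun _ => (1 : ℝ)) := cmp_bdd_of_continuous (by fun_prop)
  have h3 := IsBigO.mul (isBigO_refl (fun h : ℝ => h ^ 10) (𝓝[>] (0 : ℝ))) hr
  simp only [mul_one, one_mul] at h1 h2 h3
  refine ((h1.add h2).add h3).congr_left fun h => ?_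
  ring

lemma shift (hf : CmpEv f b0 b1 b2 b3 b4) : CmpEv (fun h => h ^ 2 * f h) 0 b0 b1 b2 b3 := by
  have h0 : (fun h : ℝ => h ^ 2) =O[𝓝[>] (0 : ℝ)] (fun _ => (1 : ℝ)) :=
    cmp_bdd_of_continuous (by fun_prop)
  have h1 := IsBigO.mul h0 hf
  have h2 := (isBigO_refl (fun h : ℝ => h ^ 10) (𝓝[>] (0 : ℝ))).const_mul_left b4
  simp only [one_mul] at h1
  refine (h1.add h2).congr_left fun h => ?_
  ring

lemma self (b0 b1 b2 b3 b4 : ℝ) :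
    CmpEv (fun h => b0 + b1 * h ^ 2 + b2 * h ^ 4 + b3 * h ^ 6 + b4 * h ^ 8) b0 b1 b2 b3 b4 := by
  refine (isBigO_zero _ _).congr_left fun h => ?_
  ring

end CmpEv

lemma cmpQ_ev {ν : ℝ} (hν : 0 < ν) (k : ℕ) (hk : Even k) :
    CmpEv (cmpQ ν k) (cmpA ν 0 k) (cmpA ν 2 k) (cmpA ν 4 k) (cmpA ν 6 k) (cmpA ν 8 k) := by
  refine IsBigO.congr_left (cmpQ_asy hν 10 k) fun h => ?_
  have z : ∀ s, Odd s → cmpA ν s k = 0 := fun s hs => cmpA_odd ν s k (hs.add_even hk)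
  simp only [Finset.sum_range_succ, Finset.sum_range_zero]
  rw [z 1 (by decide), z 3 (by decide), z 5 (by decide), z 7 (by decide), z 9 (by decide)]
  ring

lemma cmpQ_od {ν : ℝ} (hν : 0 < ν) (k : ℕ) (hk : Odd k) :
    CmpEv (fun h => cmpQ ν k h / h) (cmpA ν 1 k) (cmpA ν 3 k) (cmpA ν 5 k) (cmpA ν 7 k)
      (cmpA ν 9 k) := by
  have h1 := (isBigO_refl (fun h : ℝ => h⁻¹) (𝓝[>] (0 : ℝ))).mul (cmpQ_asy hν 11 k)
  have z : ∀ s, Even s → cmpA ν s k = 0 := fun s hs => cmpA_odd ν s k (hs.add_odd hk)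
  refine h1.congr' ?_ ?_
  · filter_upwards [self_mem_nhdsWithin] with h hh
    have hh : 0 < h := hh
    simp only [Finset.sum_range_succ, Finset.sum_range_zero]
    rw [z 0 (by decide), z 2 (by decide), z 4 (by decide), z 6 (by decide), z 8 (by decide),
      z 10 (by decide)]
    field_simp
    ring
  · filter_upwards [self_mem_nhdsWithin] with h hh
    have hh : 0 < h := hh
    field_simp

/-- Standardised second central moment. -/
noncomputable def cmpM2 (ν h : ℝ) : ℝ := cmpQ ν 2 h - cmpQ ν 1 h ^ 2

/-- Standardised fourth central moment. -/
noncomputable def cmpM4 (ν h : ℝ) : ℝ :=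
  cmpQ ν 4 h - 4 * cmpQ ν 3 h * cmpQ ν 1 h + 6 * cmpQ ν 2 h * cmpQ ν 1 h ^ 2 - 3 * cmpQ ν 1 h ^ 4

lemma CmpEv.congr' {f g : ℝ → ℝ} {b0 b1 b2 b3 b4 c0 c1 c2 c3 c4 : ℝ}
    (hf : CmpEv f b0 b1 b2 b3 b4) (hfg : ∀ h > 0, f h = g h)
    (e0 : b0 = c0) (e1 : b1 = c1) (e2 : b2 = c2) (e3 : b3 = c3) (e4 : b4 = c4) :
    CmpEv g c0 c1 c2 c3 c4 := by
  subst e0 e1 e2 e3 e4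
  refine IsBigO.congr' hf ?_ (EventuallyEq.refl _ _)
  filter_upwards [self_mem_nhdsWithin] with h hh
  rw [hfg h hh]

lemma cmpM2_ev {ν : ℝ} (hν : 0 < ν) :
    CmpEv (cmpM2 ν) (1 / ν) 0 ((ν ^ 2 - 1) / (24 * ν ^ 3)) ((ν ^ 2 - 1) / (12 * ν ^ 4))
      (cmpA ν 8 2 - (2 * cmpA ν 1 1 * cmpA ν 7 1 + 2 * cmpA ν 3 1 * cmpA ν 5 1)) := by
  have hν0 := hν.ne'
  have u1 := cmpQ_od hν 1 (by decide)
  have q2 := cmpQ_ev hν 2 (by decide)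
  refine (q2.sub (u1.mul u1).shift).congr' (fun h hh => ?_) ?_ ?_ ?_ ?_ ?_
  · unfold cmpM2; field_simp
  · rw [cmpA_0_2 hν0]; simp
  · rw [cmpA_2_2 hν0, cmpA_1_1 hν0]; field_simp; ring
  · rw [cmpA_4_2 hν0, cmpA_1_1 hν0, cmpA_3_1 hν0]; field_simp; ring
  · rw [cmpA_6_2 hν0, cmpA_1_1 hν0, cmpA_3_1 hν0, cmpA_5_1 hν0]; field_simp; ring
  · ring

lemma cmp_residual {ν : ℝ} (hν : 0 < ν) :
    (fun h => cmpM4 ν h - 3 * cmpM2 ν h ^ 2 - h ^ 2 / ν * (1 - (ν ^ 2 - 1) / (24 * ν ^ 2) * h ^ 4 +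
      (ν ^ 2 - 1) / (6 * ν ^ 3) * h ^ 6) * cmpM2 ν h ^ 2) =O[𝓝[>] (0 : ℝ)] (fun h => h ^ 10) := by
  have hν0 := hν.ne'
  have u1 := cmpQ_od hν 1 (by decide)
  have u3 := cmpQ_od hν 3 (by decide)
  have q2 := cmpQ_ev hν 2 (by decide)
  have q4 := cmpQ_ev hν 4 (by decide)
  have m2 := cmpM2_ev hν
  have u11 := u1.mul u1
  have m4 := ((q4.sub ((u3.mul u1).shift.const_mul 4)).add ((q2.mul u11).shift.const_mul 6)).sub
    ((u11.mul u11).shift.shift.const_mul 3)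
  have p := (CmpEv.self (1 / ν) 0 (-((ν ^ 2 - 1) / (24 * ν ^ 3))) ((ν ^ 2 - 1) / (6 * ν ^ 4)) 0).shift
  have m22 := m2.mul m2
  have tot := (m4.sub (m22.const_mul 3)).sub (p.mul m22)
  have fin : CmpEv (fun h => cmpM4 ν h - 3 * cmpM2 ν h ^ 2 - h ^ 2 / ν *
      (1 - (ν ^ 2 - 1) / (24 * ν ^ 2) * h ^ 4 +
      (ν ^ 2 - 1) / (6 * ν ^ 3) * h ^ 6) * cmpM2 ν h ^ 2) 0 0 0 0 0 := by
    refine tot.congr' (fun h hh => ?_) ?_ ?_ ?_ ?_ ?_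
    · unfold cmpM4
      field_simp
      ring
    · rw [cmpA_0_4 hν0]; field_simp; ring
    · rw [cmpA_2_4 hν0, cmpA_1_3 hν0, cmpA_1_1 hν0, cmpA_0_2 hν0]; field_simp; ring
    · rw [cmpA_4_4 hν0, cmpA_3_3 hν0, cmpA_1_3 hν0, cmpA_1_1 hν0, cmpA_3_1 hν0, cmpA_0_2 hν0,
        cmpA_2_2 hν0]; field_simp; ring
    · rw [cmpA_6_4 hν0, cmpA_5_3 hν0, cmpA_3_3 hν0, cmpA_1_3 hν0, cmpA_1_1 hν0, cmpA_3_1 hν0,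
        cmpA_5_1 hν0, cmpA_0_2 hν0, cmpA_2_2 hν0, cmpA_4_2 hν0]; field_simp; ring
    · rw [cmpA_8_4 hν0, cmpA_7_3 hν0, cmpA_5_3 hν0, cmpA_3_3 hν0, cmpA_1_3 hν0, cmpA_1_1 hν0,
        cmpA_3_1 hν0, cmpA_5_1 hν0, cmpA_7_1 hν0, cmpA_0_2 hν0, cmpA_2_2 hν0, cmpA_4_2 hν0,
        cmpA_6_2 hν0, cmpA_8_2 hν0]; field_simp; ring
  unfold CmpEv at fin
  simpa using fin

/-! ### Relation with the frozen definitions -/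

lemma cmpEx_eq (ν h : ℝ) (f : ℕ → ℝ) :
    cmpEx ν h f = (∑' j : ℕ, f j * (h ^ (-(2 * ν))) ^ j / (j.factorial : ℝ) ^ ν) /
      cmpZ (h ^ (-(2 * ν))) ν := by
  unfold cmpEx cmpZ cmpWl
  simp only [mul_div_assoc]

lemma cmpMean_eq {ν h : ℝ} (hν : 0 < ν) (hh : 0 < h) :
    cmpMean (h ^ (-(2 * ν))) ν = (cmpQ ν 1 h + 1 / h) / h := by
  have e : cmpMean (h ^ (-(2 * ν))) ν = cmpEx ν h (fun j => (j : ℝ)) := by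
    rw [cmpEx_eq]; rfl
  rw [e]
  have e2 : (fun j : ℕ => (j : ℝ)) = fun j => (1 / h) * (cmpW h j ^ 1 + 1 / h) := by
    funext j; unfold cmpW; field_simp; ring
  rw [e2, cmpEx_mul_left, cmpEx_add hν hh ((cmpW_good h).pow 1) (CmpGood.const _),
    cmpEx_const hν hh]
  unfold cmpQ
  ring

lemma cmpCentral_eq {ν h : ℝ} (hν : 0 < ν) (hh : 0 < h) (k : ℕ) :
    cmpCentralMoment k (h ^ (-(2 * ν))) ν =
      (1 / h) ^ k * cmpEx ν h (fun j => (cmpW h j - cmpQ ν 1 h) ^ k) := by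
  have e : cmpCentralMoment k (h ^ (-(2 * ν))) ν =
      cmpEx ν h (fun j => ((j : ℝ) - cmpMean (h ^ (-(2 * ν))) ν) ^ k) := by
    rw [cmpEx_eq]; rfl
  rw [e, cmpMean_eq hν hh, ← cmpEx_mul_left]
  congr 1
  funext j
  rw [← mul_pow]
  congr 1
  unfold cmpW
  field_simp
  ring

lemma cmpCentral_two {ν h : ℝ} (hν : 0 < ν) (hh : 0 < h) :
    cmpCentralMoment 2 (h ^ (-(2 * ν))) ν = (1 / h) ^ 2 * cmpM2 ν h := by
  rw [cmpCentral_eq hν hh]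
  congr 1
  have gW := cmpW_good h
  set m := cmpQ ν 1 h with hm
  have e : (fun j => (cmpW h j - m) ^ 2) =
      fun j => cmpW h j ^ 2 - (2 * m) * cmpW h j ^ 1 + m ^ 2 := by
    funext j; ring
  rw [e, cmpEx_add hν hh ((gW.pow 2).sub ((CmpGood.const _).mul (gW.pow 1))) (CmpGood.const _),
    cmpEx_sub hν hh (gW.pow 2) ((CmpGood.const _).mul (gW.pow 1)), cmpEx_mul_left,
    cmpEx_const hν hh]
  change cmpQ ν 2 h - 2 * m * cmpQ ν 1 h + m ^ 2 = _
  unfold cmpM2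
  rw [← hm]; ring

lemma cmpCentral_four {ν h : ℝ} (hν : 0 < ν) (hh : 0 < h) :
    cmpCentralMoment 4 (h ^ (-(2 * ν))) ν = (1 / h) ^ 4 * cmpM4 ν h := by
  rw [cmpCentral_eq hν hh]
  congr 1
  have gW := cmpW_good h
  set m := cmpQ ν 1 h with hm
  have e : (fun j => (cmpW h j - m) ^ 4) =
      fun j => cmpW h j ^ 4 + (-4 * m) * cmpW h j ^ 3 + (6 * m ^ 2) * cmpW h j ^ 2 +
        (-4 * m ^ 3) * cmpW h j ^ 1 + m ^ 4 := by
    funext j; ring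
  have g3 : CmpGood (fun j => (-4 * m) * cmpW h j ^ 3) := (CmpGood.const _).mul (gW.pow 3)
  have g2 : CmpGood (fun j => (6 * m ^ 2) * cmpW h j ^ 2) := (CmpGood.const _).mul (gW.pow 2)
  have g1 : CmpGood (fun j => (-4 * m ^ 3) * cmpW h j ^ 1) := (CmpGood.const _).mul (gW.pow 1)
  rw [e, cmpEx_add hν hh ((((gW.pow 4).add g3).add g2).add g1) (CmpGood.const _),
    cmpEx_add hν hh (((gW.pow 4).add g3).add g2) g1,
    cmpEx_add hν hh ((gW.pow 4).add g3) g2, cmpEx_add hν hh (gW.pow 4) g3,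
    cmpEx_mul_left, cmpEx_mul_left, cmpEx_mul_left, cmpEx_const hν hh]
  change cmpQ ν 4 h + -4 * m * cmpQ ν 3 h + 6 * m ^ 2 * cmpQ ν 2 h +
    -4 * m ^ 3 * cmpQ ν 1 h + m ^ 4 = _
  unfold cmpM4
  rw [← hm]; ring

lemma cmp_final_h {ν : ℝ} (hν : 0 < ν) : ∃ C > (0 : ℝ), ∀ᶠ h in 𝓝[>] (0 : ℝ),
    |ν * (1 / h ^ 2) * cmpExcessKurtosis (h ^ (-(2 * ν))) ν - 1 +
      ((ν ^ 2 - 1) / (24 * ν ^ 2)) * h ^ 4 - ((ν ^ 2 - 1) / (6 * ν ^ 3)) * h ^ 6| ≤ C * h ^ 8 := by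
  obtain ⟨C, hC0, hC⟩ := (cmp_residual hν).exists_pos
  have hlow : ∀ᶠ h in 𝓝[>] (0 : ℝ), 1 / (2 * ν) < cmpM2 ν h := by
    apply (cmpM2_ev hν).tendsto.eventually_const_lt
    apply one_div_lt_one_div_of_lt hν; linarith
  refine ⟨ν * C * (2 * ν) ^ 2, by positivity, ?_⟩
  filter_upwards [hC.bound, hlow, self_mem_nhdsWithin] with h hb hl hh
  have hh : 0 < h := hh
  have hm0 : 0 < cmpM2 ν h := lt_trans (by positivity) hl
  unfold cmpExcessKurtosis
  rw [cmpCentral_two hν hh, cmpCentral_four hν hh]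
  rw [Real.norm_eq_abs, Real.norm_of_nonneg (by positivity)] at hb
  set R := cmpM4 ν h - 3 * cmpM2 ν h ^ 2 - h ^ 2 / ν * (1 - (ν ^ 2 - 1) / (24 * ν ^ 2) * h ^ 4 +
      (ν ^ 2 - 1) / (6 * ν ^ 3) * h ^ 6) * cmpM2 ν h ^ 2 with hR
  have e : ν * (1 / h ^ 2) * ((1 / h) ^ 4 * cmpM4 ν h / ((1 / h) ^ 2 * cmpM2 ν h) ^ 2 - 3) - 1 +
      ((ν ^ 2 - 1) / (24 * ν ^ 2)) * h ^ 4 - ((ν ^ 2 - 1) / (6 * ν ^ 3)) * h ^ 6 =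
      ν * (1 / h ^ 2) * (R * (1 / cmpM2 ν h) ^ 2) := by
    rw [hR]
    field_simp
    ring
  rw [e, abs_mul, abs_mul R, abs_of_pos (by positivity : 0 < ν * (1 / h ^ 2)),
    abs_of_pos (by positivity : 0 < (1 / cmpM2 ν h) ^ 2)]
  have hi : 1 / cmpM2 ν h ≤ 2 * ν := by
    rw [div_lt_iff₀ (by positivity)] at hl
    rw [div_le_iff₀ hm0]; linarith
  calc ν * (1 / h ^ 2) * (|R| * (1 / cmpM2 ν h) ^ 2)
      ≤ ν * (1 / h ^ 2) * ((C * h ^ 10) * (2 * ν) ^ 2) := by gcongr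
    _ = _ := by field_simp

/-- Asymptotics of the excess kurtosis of the `CMP(λ,ν)` distribution:
`γ₂ = (λ^{−1/ν}/ν)(1 − ((ν²−1)/(24ν²)) λ^{−2/ν} + ((ν²−1)/(6ν³)) λ^{−3/ν}
  + O(λ^{−4/ν}))` as `λ → ∞`. -/
theorem cmpExcessKurtosis_asymptotic (ν : ℝ) (hν : 0 < ν) :
    ∃ C > (0 : ℝ), ∃ Λ > (0 : ℝ), ∀ lam : ℝ, lam ≥ Λ →
      |ν * lam ^ (1 / ν) * cmpExcessKurtosis lam ν - 1 +
          ((ν ^ 2 - 1) / (24 * ν ^ 2)) * lam ^ (-(2 / ν)) -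
          ((ν ^ 2 - 1) / (6 * ν ^ 3)) * lam ^ (-(3 / ν))|
        ≤ C * lam ^ (-(4 / ν)) := by
  obtain ⟨C, hC, H⟩ := cmp_final_h hν
  have ht : Tendsto (fun lam : ℝ => lam ^ (-(1 / (2 * ν)))) atTop (𝓝[>] (0 : ℝ)) := by
    rw [tendsto_nhdsWithin_iff]
    refine ⟨tendsto_rpow_neg_atTop (by positivity), ?_⟩
    filter_upwards [eventually_gt_atTop 0] with x hx
    exact Real.rpow_pos_of_pos hx _
  obtain ⟨Λ, hΛ⟩ := eventually_atTop.1 (ht.eventually H)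
  refine ⟨C, hC, max Λ 1, by positivity, fun lam hl => ?_⟩
  have h0 : 0 < lam := lt_of_lt_of_le one_pos ((le_max_right _ _).trans hl)
  have key := hΛ lam ((le_max_left _ _).trans hl)
  have e0 : (lam ^ (-(1 / (2 * ν)))) ^ (-(2 * ν)) = lam := by
    rw [← Real.rpow_mul h0.le]
    have : -(1 / (2 * ν)) * -(2 * ν) = 1 := by field_simp
    rw [this, Real.rpow_one]
  have en : ∀ n : ℕ, (lam ^ (-(1 / (2 * ν)))) ^ n = lam ^ (-((n : ℝ) / (2 * ν))) := by
    intro n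
    rw [← Real.rpow_natCast, ← Real.rpow_mul h0.le]
    congr 1
    field_simp
  rw [e0, en, en, en, en, one_div (lam ^ _), ← Real.rpow_neg h0.le, neg_neg] at key
  have f2 : ((2 : ℕ) : ℝ) / (2 * ν) = 1 / ν := by push_cast; field_simp
  have f4 : ((4 : ℕ) : ℝ) / (2 * ν) = 2 / ν := by push_cast; field_simp; norm_num
  have f6 : ((6 : ℕ) : ℝ) / (2 * ν) = 3 / ν := by push_cast; field_simp; norm_num
  have f8 : ((8 : ℕ) : ℝ) / (2 * ν) = 4 / ν := by push_cast; field_simp; norm_num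
  rw [f2, f4, f6, f8] at key
  exact key
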